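/- arXiv:2401.11494 — 10 statements merged into one kernel-verified Lean document; each statement's English description precedes it below -/
import Mathlib

section
/- Let A, B ∈ ℂ^{m×n}, and let X ∈ ℂ^{n×m} be the Moore–Penrose inverse of A and Y ∈ ℂ^{n×m} be the Moore–Penrose inverse of B. Then the following are equivalent: (a) A ≤⋄ B; (b) R(B*) = R(A*) + R(Y − X) and R(A*) ∩ R(Y − X) = {0}; (c) R(A*) ∩ R(Y − X) = {0} and R(A*) ⊆ R(B*). -/
open Matrix

noncomputable section

/-- Column space of a complex matrix: the range of `x ↦ M x`. -/
def colSpace {m n : ℕ} (M : Matrix (Fin m) (Fin n) ℂ) : Submodule ℂ (Fin m → ℂ) :=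
  LinearMap.range M.mulVecLin

/-- `X` is the Moore–Penrose inverse of `M`. -/
def IsMP {m n : ℕ} (M : Matrix (Fin m) (Fin n) ℂ) (X : Matrix (Fin n) (Fin m) ℂ) : Prop :=
  M * X * M = M ∧ X * M * X = X ∧ (M * X)ᴴ = M * X ∧ (X * M)ᴴ = X * M

/-- Diamond partial order: `R(A) ⊆ R(B)`, `R(A*) ⊆ R(B*)` and `A B* A = A A* A`. -/
def diamondLE {m n : ℕ} (A B : Matrix (Fin m) (Fin n) ℂ) : Prop :=
  colSpace A ≤ colSpace B ∧ colSpace Aᴴ ≤ colSpace Bᴴ ∧ A * Bᴴ * A = A * Aᴴ * A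

/-- Star partial order: `A* A = A* B` and `A A* = B A*`. -/
def starLE {m n : ℕ} (A B : Matrix (Fin m) (Fin n) ℂ) : Prop :=
  Aᴴ * A = Aᴴ * B ∧ A * Aᴴ = B * Aᴴ

/-- Minus partial order: there is an inner inverse `G` of `A` with `G A = G B` and `A G = B G`. -/
def minusLE {m n : ℕ} (A B : Matrix (Fin m) (Fin n) ℂ) : Prop :=
  ∃ G : Matrix (Fin n) (Fin m) ℂ, A * G * A = A ∧ G * A = G * B ∧ A * G = B * G

/-- Space pre-order: `R(A) ⊆ R(B)` and `R(A*) ⊆ R(B*)`. -/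
def spaceLE {m n : ℕ} (A B : Matrix (Fin m) (Fin n) ℂ) : Prop :=
  colSpace A ≤ colSpace B ∧ colSpace Aᴴ ≤ colSpace Bᴴ

/-- Left star partial order: `A* A = A* B` and `R(A) ⊆ R(B)`. -/
def leftStarLE {m n : ℕ} (A B : Matrix (Fin m) (Fin n) ℂ) : Prop :=
  Aᴴ * A = Aᴴ * B ∧ colSpace A ≤ colSpace B

/-- Right star partial order: `A A* = B A*` and `R(A*) ⊆ R(B*)`. -/
def rightStarLE {m n : ℕ} (A B : Matrix (Fin m) (Fin n) ℂ) : Prop :=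
  A * Aᴴ = B * Aᴴ ∧ colSpace Aᴴ ≤ colSpace Bᴴ

/-- The canonical equivalence `Fin r ⊕ Fin (n - r) ≃ Fin n` when `r ≤ n`. -/
def finPairEquiv {r n : ℕ} (h : r ≤ n) : Fin r ⊕ Fin (n - r) ≃ Fin n :=
  finSumFinEquiv.trans (finCongr (Nat.add_sub_cancel' h))

/-- The canonical equivalence `(Fin t ⊕ Fin (r - t)) ⊕ Fin (m - r) ≃ Fin m`
when `t ≤ r ≤ m`. -/
def finTriEquiv {t r m : ℕ} (ht : t ≤ r) (hr : r ≤ m) :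
    (Fin t ⊕ Fin (r - t)) ⊕ Fin (m - r) ≃ Fin m :=
  (Equiv.sumCongr (finPairEquiv ht) (Equiv.refl (Fin (m - r)))).trans (finPairEquiv hr)

/-!
Pass from `A` and `B` to their Moore–Penrose inverses `X` and `Y`. Since `X` and `A*` are
multiples of each other on either side, `R(A*) = R(X)` and `A ≤⋄ B` becomes `R(X) ⊆ R(Y)`,
`X B Y = X`, `X B X = X`. The two equations say that `X B` fixes `R(X)` and annihilates `R(Y - X)`,
so these spaces meet only in `0`. Conversely, if `R(X) ⊆ R(Y)`, then `Y B X = X` and `Y B Y = Y`, so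
`X - X B Y = (Y - X) (B Y - 1)` and `X - X B X = (Y - X) B X` have their columns in
`R(X) ∩ R(Y - X)`.
-/

open LinearMap (range)

section LinearMap

variable {R E F G : Type*}

theorem range_le_range_iff_comp_eq [Semiring R] [AddCommMonoid E] [AddCommMonoid F]
    [AddCommMonoid G] [Module R E] [Module R F] [Module R G] {f : G →ₗ[R] F} {g : E →ₗ[R] F}
    {h : F →ₗ[R] E} (hg : g ∘ₗ h ∘ₗ g = g) : range f ≤ range g ↔ g ∘ₗ h ∘ₗ f = f := by
  constructor
  · intro hfg
    ext x
    obtain ⟨y, hy⟩ := hfg ⟨x, rfl⟩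
    simpa only [LinearMap.comp_apply, hy] using LinearMap.congr_fun hg y
  · intro hf
    rw [← hf]
    exact LinearMap.range_comp_le_range _ _

variable [Ring R] [AddCommGroup E] [AddCommGroup F] [Module R E] [Module R F]

theorem range_sup_range_sub (f g : E →ₗ[R] F) :
    range f ⊔ range (g - f) = range f ⊔ range g := by
  apply le_antisymm <;> refine sup_le le_sup_left ?_ <;> rintro _ ⟨x, rfl⟩
  · exact sub_mem (Submodule.mem_sup_right ⟨x, rfl⟩) (Submodule.mem_sup_left ⟨x, rfl⟩)
  · rw [← add_sub_cancel (f x) (g x)]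
    exact Submodule.add_mem_sup ⟨x, rfl⟩ ⟨x, rfl⟩

theorem disjoint_range_sub_iff {f g : E →ₗ[R] F} {h : F →ₗ[R] E} (hg : g ∘ₗ h ∘ₗ g = g)
    (hf : g ∘ₗ h ∘ₗ f = f) :
    Disjoint (range f) (range (g - f)) ↔ f ∘ₗ h ∘ₗ g = f ∧ f ∘ₗ h ∘ₗ f = f := by
  rw [Submodule.disjoint_def]
  simp only [LinearMap.ext_iff, LinearMap.comp_apply] at hg hf ⊢
  constructor
  · intro hdisj
    have eq_of_sub_mem {x y : E} (hxy : f x - f y ∈ range (g - f)) : f x = f y :=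
      sub_eq_zero.mp (hdisj _ ⟨x - y, map_sub f x y⟩ hxy)
    refine ⟨fun x ↦ eq_of_sub_mem ⟨x - h (g x), ?_⟩, fun x ↦ (eq_of_sub_mem ⟨h (f x), ?_⟩).symm⟩
    · change (g - f) (x - h (g x)) = f (h (g x)) - f x
      simp [hg]
    · change (g - f) (h (f x)) = f x - f (h (f x))
      simp [hf]
  · rintro ⟨hfg, hff⟩ _ ⟨x, rfl⟩ ⟨y, hy⟩
    calc f x = f (h (f x)) := (hff x).symm
      _ = f (h ((g - f) y)) := by rw [hy]
      _ = 0 := by simp [hfg, hff]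

end LinearMap

section Matrix

variable {R k l m n : Type*} [Fintype m] [Fintype n]

section CommSemiring

variable [CommSemiring R]

theorem mulVecLin_comp_comp_eq_iff [Fintype l] {A : Matrix k m R} {B : Matrix m n R}
    {C : Matrix n l R} {D : Matrix k l R} :
    A.mulVecLin ∘ₗ B.mulVecLin ∘ₗ C.mulVecLin = D.mulVecLin ↔ A * B * C = D := by
  rw [← mulVecLin_mul, ← mulVecLin_mul, ← Matrix.mul_assoc, ← LinearMap.coe_injective.eq_iff]
  exact mulVec_injective.eq_iff

theorem range_mulVecLin_mul_le (A : Matrix l m R) (B : Matrix m n R) :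
    range (A * B).mulVecLin ≤ range A.mulVecLin := by
  rw [mulVecLin_mul]
  exact LinearMap.range_comp_le_range _ _

theorem range_mulVecLin_le_iff_mul_eq [Fintype l] {A : Matrix m l R} {B : Matrix m n R}
    {G : Matrix n m R} (hG : B * G * B = B) :
    range A.mulVecLin ≤ range B.mulVecLin ↔ B * G * A = A := by
  rw [range_le_range_iff_comp_eq (mulVecLin_comp_comp_eq_iff.mpr hG), mulVecLin_comp_comp_eq_iff]

end CommSemiring

theorem mulVecLin_sub [CommRing R] (A B : Matrix k n R) :
    (A - B).mulVecLin = A.mulVecLin - B.mulVecLin :=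
  map_sub (mulVecBilin R R) A B

/-- `X` is the Moore–Penrose inverse of `A`. This is `IsMP` for matrices over an arbitrary
coefficient semiring with an involution. -/
structure IsMoorePenrose [NonUnitalNonAssocSemiring R] [Star R] (A : Matrix m n R)
    (X : Matrix n m R) : Prop where
  mul_inv_mul : A * X * A = A
  inv_mul_inv : X * A * X = X
  isHermitian_mul_inv : (A * X).IsHermitian
  isHermitian_inv_mul : (X * A).IsHermitian

/-- The diamond partial order `A ≤⋄ B`. This is `diamondLE` for matrices over an arbitrary
commutative coefficient semiring with an involution. -/
structure IsDiamondLE [CommSemiring R] [Star R] (A B : Matrix m n R) : Prop where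
  range_le : range A.mulVecLin ≤ range B.mulVecLin
  range_conjTranspose_le : range Aᴴ.mulVecLin ≤ range Bᴴ.mulVecLin
  mul_conjTranspose_mul : A * Bᴴ * A = A * Aᴴ * A

namespace IsMoorePenrose

section NonUnitalSemiring

variable [NonUnitalSemiring R] [StarRing R] {A : Matrix m n R} {X : Matrix n m R}

theorem conjTranspose_mul_mul_inv (h : IsMoorePenrose A X) : Aᴴ * (A * X) = Aᴴ := by
  rw [← h.isHermitian_mul_inv.eq, ← conjTranspose_mul, h.mul_inv_mul]

theorem inv_mul_mul_conjTranspose (h : IsMoorePenrose A X) : X * A * Aᴴ = Aᴴ := by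
  rw [← h.isHermitian_inv_mul.eq, ← conjTranspose_mul, ← Matrix.mul_assoc, h.mul_inv_mul]

theorem inv_mul_conjTranspose_inv_mul_conjTranspose (h : IsMoorePenrose A X) :
    X * (Xᴴ * Aᴴ) = X := by
  rw [← conjTranspose_mul, h.isHermitian_mul_inv.eq, ← Matrix.mul_assoc, h.inv_mul_inv]

theorem conjTranspose_mul_conjTranspose_inv_mul_inv (h : IsMoorePenrose A X) :
    Aᴴ * Xᴴ * X = X := by
  rw [← conjTranspose_mul, h.isHermitian_inv_mul.eq, h.inv_mul_inv]

theorem conjTranspose_mul_eq_iff (h : IsMoorePenrose A X) {M N : Matrix m l R} :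
    Aᴴ * M = Aᴴ * N ↔ X * M = X * N := by
  constructor <;> intro hMN
  · rw [← h.inv_mul_conjTranspose_inv_mul_conjTranspose]
    simp only [Matrix.mul_assoc, hMN]
  · rw [← h.conjTranspose_mul_mul_inv]
    simp only [Matrix.mul_assoc, hMN]

theorem mul_conjTranspose_eq_iff (h : IsMoorePenrose A X) {M N : Matrix l n R} :
    M * Aᴴ = N * Aᴴ ↔ M * X = N * X := by
  constructor <;> intro hMN
  · rw [← h.conjTranspose_mul_conjTranspose_inv_mul_inv]
    simp only [← Matrix.mul_assoc, hMN]
  · rw [← h.inv_mul_mul_conjTranspose]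
    simp only [← Matrix.mul_assoc, hMN]

theorem mul_conjTranspose_mul_eq_iff (h : IsMoorePenrose A X) {B : Matrix m n R} :
    A * Bᴴ * A = A * Aᴴ * A ↔ X * B * X = X :=
  calc A * Bᴴ * A = A * Aᴴ * A
    _ ↔ Aᴴ * (B * Aᴴ) = Aᴴ * (A * Aᴴ) := by
      rw [← conjTranspose_inj]
      simp only [conjTranspose_mul, conjTranspose_conjTranspose]
    _ ↔ X * B * Aᴴ = X * A * Aᴴ := by
      rw [h.conjTranspose_mul_eq_iff, Matrix.mul_assoc, Matrix.mul_assoc]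
    _ ↔ X * B * X = X := by rw [h.mul_conjTranspose_eq_iff, h.inv_mul_inv]

end NonUnitalSemiring

section CommSemiring

variable [CommSemiring R] [StarRing R] {A B : Matrix m n R} {X Y : Matrix n m R}

theorem range_conjTranspose (h : IsMoorePenrose A X) :
    range Aᴴ.mulVecLin = range X.mulVecLin := by
  apply le_antisymm
  · rw [← h.inv_mul_mul_conjTranspose, Matrix.mul_assoc]
    exact range_mulVecLin_mul_le _ _
  · rw [← h.conjTranspose_mul_conjTranspose_inv_mul_inv, Matrix.mul_assoc]
    exact range_mulVecLin_mul_le _ _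

theorem range_le_range_iff_inv_mul_eq (hX : IsMoorePenrose A X) (hY : IsMoorePenrose B Y) :
    range A.mulVecLin ≤ range B.mulVecLin ↔ X * B * Y = X :=
  calc range A.mulVecLin ≤ range B.mulVecLin
    _ ↔ B * Y * A = A := range_mulVecLin_le_iff_mul_eq hY.mul_inv_mul
    _ ↔ Aᴴ * (B * Y) = Aᴴ * (A * X) := by
      rw [← conjTranspose_inj, conjTranspose_mul, hY.isHermitian_mul_inv.eq,
        hX.conjTranspose_mul_mul_inv]
    _ ↔ X * B * Y = X := by
      rw [hX.conjTranspose_mul_eq_iff, ← Matrix.mul_assoc, ← Matrix.mul_assoc, hX.inv_mul_inv]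

theorem isDiamondLE_iff (hX : IsMoorePenrose A X) (hY : IsMoorePenrose B Y) :
    IsDiamondLE A B ↔
      (X * B * Y = X ∧ X * B * X = X) ∧ range X.mulVecLin ≤ range Y.mulVecLin := by
  rw [← hX.range_le_range_iff_inv_mul_eq hY, ← hX.mul_conjTranspose_mul_eq_iff,
    ← hX.range_conjTranspose, ← hY.range_conjTranspose]
  exact ⟨fun ⟨h₁, h₂, h₃⟩ ↦ ⟨⟨h₁, h₃⟩, h₂⟩, fun ⟨⟨h₁, h₃⟩, h₂⟩ ↦ ⟨h₁, h₂, h₃⟩⟩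

end CommSemiring

variable [CommRing R] [StarRing R] {A B : Matrix m n R} {X Y : Matrix n m R}

theorem isDiamondLE_iff_disjoint (hX : IsMoorePenrose A X) (hY : IsMoorePenrose B Y) :
    IsDiamondLE A B ↔ Disjoint (range X.mulVecLin) (range (Y - X).mulVecLin) ∧
      range X.mulVecLin ≤ range Y.mulVecLin := by
  rw [hX.isDiamondLE_iff hY, and_congr_left_iff]
  intro hXY
  have hYBY := mulVecLin_comp_comp_eq_iff.mpr hY.inv_mul_inv
  have hYBX := (range_le_range_iff_comp_eq hYBY).mp hXY
  rw [mulVecLin_sub, disjoint_range_sub_iff hYBY hYBX, mulVecLin_comp_comp_eq_iff,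
    mulVecLin_comp_comp_eq_iff]

end IsMoorePenrose

theorem diamond_iff_range_direct_sum_general [CommRing R] [StarRing R] {A B : Matrix m n R}
    {X Y : Matrix n m R} (hX : IsMoorePenrose A X) (hY : IsMoorePenrose B Y) :
    (IsDiamondLE A B ↔
      (range Bᴴ.mulVecLin = range Aᴴ.mulVecLin ⊔ range (Y - X).mulVecLin ∧
        range Aᴴ.mulVecLin ⊓ range (Y - X).mulVecLin = ⊥)) ∧
    (IsDiamondLE A B ↔
      (range Aᴴ.mulVecLin ⊓ range (Y - X).mulVecLin = ⊥ ∧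
        range Aᴴ.mulVecLin ≤ range Bᴴ.mulVecLin)) := by
  rw [hX.range_conjTranspose, hY.range_conjTranspose, ← disjoint_iff]
  have hsup : range Y.mulVecLin = range X.mulVecLin ⊔ range (Y - X).mulVecLin ↔
      range X.mulVecLin ≤ range Y.mulVecLin := by
    rw [mulVecLin_sub, range_sup_range_sub, eq_comm, sup_eq_right]
  rw [hsup, and_comm (a := _ ≤ _)]
  exact ⟨hX.isDiamondLE_iff_disjoint hY, hX.isDiamondLE_iff_disjoint hY⟩

end Matrix

theorem IsMP.isMoorePenrose {m n : ℕ} {A : Matrix (Fin m) (Fin n) ℂ}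
    {X : Matrix (Fin n) (Fin m) ℂ} (h : IsMP A X) : IsMoorePenrose A X :=
  let ⟨h₁, h₂, h₃, h₄⟩ := h
  ⟨h₁, h₂, h₃, h₄⟩

theorem diamondLE_iff_isDiamondLE {m n : ℕ} {A B : Matrix (Fin m) (Fin n) ℂ} :
    diamondLE A B ↔ IsDiamondLE A B :=
  ⟨fun ⟨h₁, h₂, h₃⟩ ↦ ⟨h₁, h₂, h₃⟩, fun ⟨h₁, h₂, h₃⟩ ↦ ⟨h₁, h₂, h₃⟩⟩

theorem diamond_iff_range_direct_sum {m n : ℕ} (A B : Matrix (Fin m) (Fin n) ℂ)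
    (X Y : Matrix (Fin n) (Fin m) ℂ) (hX : IsMP A X) (hY : IsMP B Y) :
    (diamondLE A B ↔
      (colSpace Bᴴ = colSpace Aᴴ ⊔ colSpace (Y - X) ∧
        colSpace Aᴴ ⊓ colSpace (Y - X) = ⊥)) ∧
    (diamondLE A B ↔
      (colSpace Aᴴ ⊓ colSpace (Y - X) = ⊥ ∧ colSpace Aᴴ ≤ colSpace Bᴴ)) := by
  rw [diamondLE_iff_isDiamondLE]
  exact diamond_iff_range_direct_sum_general hX.isMoorePenrose hY.isMoorePenrose
end
end

section
/- Let A, B ∈ ℂ^{m×n}, and let X ∈ ℂ^{n×m} be the Moore–Penrose inverse of A and Y ∈ ℂ^{n×m} be the Moore–Penrose inverse of B. Then the following are equivalent: (a) A ≤⋄ B; (b) rank(Y − X) = rank((I_n − XA)·Y) and R(A*) ⊆ R(B*); (c) there exists an idempotent matrix Q ∈ ℂ^{n×n} (Q² = Q) with X = Q·Y, and R(A*) ⊆ R(B*). -/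
open Matrix

noncomputable section

/-!
The Moore–Penrose inverses `X` and `Y` of `A` and `B` have the column spaces of `Aᴴ` and `Bᴴ`, and
`Xᴴ` and `Yᴴ` those of `A` and `B`. Hence `A ≤⋄ B` says exactly that `X * B * Y = X`,
`Y * B * X = X` and `X * B * X = X`, i.e. that `X` lies below `Y` in the minus order. The inclusion
of the column spaces of the adjoints is the equation `Y * B * X = X`; granted it, the other two
equations say that `X * B` is an idempotent taking `Y` to `X`. They also make `1 - X * B` undo the
left multiplication by `1 - X * A` that takes `Y - X` to `(1 - X * A) * Y`, which is possible
precisely when that multiplication preserves the rank.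
-/

section Factorization

variable {R l m n : Type*} [Fintype m] [Fintype n]

theorem range_mulVecLin_le_iff_exists_eq_mul [CommSemiring R] {M : Matrix l m R}
    {N : Matrix l n R} :
    LinearMap.range M.mulVecLin ≤ LinearMap.range N.mulVecLin ↔
      ∃ C : Matrix n m R, M = N * C := by
  constructor
  · intro hle
    rw [Matrix.range_mulVecLin M, Submodule.span_le, Set.range_subset_iff] at hle
    choose c hc using hle
    exact ⟨of fun i j => c j i, Matrix.ext fun i j => (congrFun (hc j) i).symm⟩
  · rintro ⟨C, rfl⟩
    rw [Matrix.mulVecLin_mul]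
    exact LinearMap.range_comp_le_range _ _

theorem range_mulVecLin_le_iff_mul_mul_eq [CommSemiring R] [Fintype l] {M : Matrix l m R}
    {N : Matrix l n R} {G : Matrix n l R} (hG : N * G * N = N) :
    LinearMap.range M.mulVecLin ≤ LinearMap.range N.mulVecLin ↔ N * G * M = M := by
  rw [range_mulVecLin_le_iff_exists_eq_mul]
  constructor
  · rintro ⟨C, rfl⟩
    rw [← Matrix.mul_assoc, hG]
  · intro hM
    exact ⟨G * M, by rw [← Matrix.mul_assoc, hM]⟩

theorem rank_eq_rank_mul_iff_exists_mul_eq [Field R] [Fintype l] {Z : Matrix l m R}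
    {M : Matrix m n R} :
    M.rank = (Z * M).rank ↔ ∃ C : Matrix m l R, C * (Z * M) = M := by
  constructor
  · intro hrank
    have hle : LinearMap.range (Z * M)ᵀ.mulVecLin ≤ LinearMap.range Mᵀ.mulVecLin :=
      range_mulVecLin_le_iff_exists_eq_mul.2 ⟨Zᵀ, transpose_mul Z M⟩
    have hrows : LinearMap.range (Z * M)ᵀ.mulVecLin = LinearMap.range Mᵀ.mulVecLin :=
      Submodule.eq_of_le_of_finrank_eq hle <|
        (rank_transpose (Z * M)).trans <| hrank.symm.trans (rank_transpose M).symm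
    obtain ⟨C, hC⟩ := range_mulVecLin_le_iff_exists_eq_mul.1 hrows.ge
    refine ⟨Cᵀ, transpose_injective ?_⟩
    rw [transpose_mul, transpose_transpose, hC]
  · rintro ⟨C, hC⟩
    refine le_antisymm ?_ (rank_mul_le_right Z M)
    calc M.rank = (C * (Z * M)).rank := by rw [hC]
      _ ≤ (Z * M).rank := rank_mul_le_right _ _

end Factorization

section MinusOrder

variable {R m n : Type*} [Fintype m] [Fintype n] {A B : Matrix m n R} {X Y : Matrix n m R}

theorem exists_isIdempotentElem_eq_mul_iff [Semiring R] (hY : Y * B * Y = Y)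
    (hYX : Y * B * X = X) :
    (∃ Q : Matrix n n R, IsIdempotentElem Q ∧ X = Q * Y) ↔ X * B * Y = X ∧ X * B * X = X := by
  constructor
  · rintro ⟨Q, hQ, rfl⟩
    constructor
    · rw [Matrix.mul_assoc Q Y B, Matrix.mul_assoc Q, hY]
    · rw [Matrix.mul_assoc Q Y B, Matrix.mul_assoc Q, hYX, ← Matrix.mul_assoc, hQ.eq]
  · rintro ⟨hXY, hXX⟩
    refine ⟨X * B, ?_, hXY.symm⟩
    rw [IsIdempotentElem, ← Matrix.mul_assoc, hXX]

theorem rank_sub_eq_rank_one_sub_mul_iff [Field R] [DecidableEq n] (hX : X * A * X = X)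
    (hY : Y * B * Y = Y) (hYX : Y * B * X = X) :
    (Y - X).rank = ((1 - X * A) * Y).rank ↔ X * B * Y = X ∧ X * B * X = X := by
  have hkill : (1 - X * A) * X = 0 := by rw [Matrix.sub_mul, Matrix.one_mul, hX, sub_self]
  have hsub : (1 - X * A) * Y = (1 - X * A) * (Y - X) := by rw [Matrix.mul_sub, hkill, sub_zero]
  rw [hsub, rank_eq_rank_mul_iff_exists_mul_eq, ← hsub]
  constructor
  · rintro ⟨C, hC⟩
    have hY_sub : (Y - X) * B * Y = Y - X := by
      rw [← hC]
      simp only [Matrix.mul_assoc] at hY ⊢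
      rw [hY]
    have hX_sub : (Y - X) * B * X = 0 := by
      rw [← hC]
      simp only [Matrix.mul_assoc] at hYX ⊢
      rw [hYX, hkill, Matrix.mul_zero]
    rw [Matrix.sub_mul, Matrix.sub_mul, hY] at hY_sub
    rw [Matrix.sub_mul, Matrix.sub_mul, hYX, sub_eq_zero] at hX_sub
    exact ⟨sub_right_inj.1 hY_sub, hX_sub.symm⟩
  · rintro ⟨hXY, hXX⟩
    have hXB : (1 - X * B) * X = 0 := by rw [Matrix.sub_mul, Matrix.one_mul, hXX, sub_self]
    refine ⟨1 - X * B, ?_⟩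
    calc (1 - X * B) * ((1 - X * A) * Y)
        = (1 - X * B) * Y - (1 - X * B) * X * (A * Y) := by
          simp only [Matrix.sub_mul, Matrix.mul_sub, Matrix.one_mul, Matrix.mul_assoc]
      _ = Y - X := by rw [hXB, Matrix.zero_mul, sub_zero, Matrix.sub_mul, Matrix.one_mul, hXY]

end MinusOrder

/-- `X` is the Moore–Penrose inverse of `A`, for matrices over any semiring with involution; `IsMP`
is the complex case. -/
structure IsMoorePenroseInverse {R m n : Type*} [NonUnitalSemiring R] [StarRing R] [Fintype m]
    [Fintype n] (A : Matrix m n R) (X : Matrix n m R) : Prop where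
  mul_inverse_mul : A * X * A = A
  inverse_mul_inverse : X * A * X = X
  isHermitian_mul_inverse : (A * X).IsHermitian
  isHermitian_inverse_mul : (X * A).IsHermitian

/-- The relation `A ≤⋄ B` for matrices over any commutative semiring with involution;
`diamondLE` is the complex case. -/
def IsDiamondLE_s2 {R m n : Type*} [CommSemiring R] [StarRing R] [Fintype m] [Fintype n]
    (A B : Matrix m n R) : Prop :=
  LinearMap.range A.mulVecLin ≤ LinearMap.range B.mulVecLin ∧
    LinearMap.range Aᴴ.mulVecLin ≤ LinearMap.range Bᴴ.mulVecLin ∧ A * Bᴴ * A = A * Aᴴ * A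

namespace IsMoorePenroseInverse

variable {R m n : Type*} [Fintype m] [Fintype n] {A B : Matrix m n R} {X Y : Matrix n m R}

section NonUnitalSemiring

variable [NonUnitalSemiring R] [StarRing R]

theorem symm (hX : IsMoorePenroseInverse A X) : IsMoorePenroseInverse X A :=
  ⟨hX.inverse_mul_inverse, hX.mul_inverse_mul, hX.isHermitian_inverse_mul,
    hX.isHermitian_mul_inverse⟩

theorem inverse_mul_mul_conjTranspose (hX : IsMoorePenroseInverse A X) : X * A * Aᴴ = Aᴴ := by
  rw [← hX.isHermitian_inverse_mul.eq, ← conjTranspose_mul, ← Matrix.mul_assoc, hX.mul_inverse_mul]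

theorem conjTranspose_mul_mul_inverse (hX : IsMoorePenroseInverse A X) : Aᴴ * A * X = Aᴴ := by
  rw [Matrix.mul_assoc, ← hX.isHermitian_mul_inverse.eq, ← conjTranspose_mul, hX.mul_inverse_mul]

theorem conjTranspose_mul_conjTranspose_mul_inverse (hX : IsMoorePenroseInverse A X) :
    Aᴴ * Xᴴ * X = X := by
  rw [← conjTranspose_mul, hX.isHermitian_inverse_mul.eq, hX.inverse_mul_inverse]

theorem inverse_mul_conjTranspose_mul_conjTranspose (hX : IsMoorePenroseInverse A X) :
    X * Xᴴ * Aᴴ = X := by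
  rw [Matrix.mul_assoc, ← conjTranspose_mul, hX.isHermitian_mul_inverse.eq, ← Matrix.mul_assoc,
    hX.inverse_mul_inverse]

theorem mul_conjTranspose_mul_eq_iff (hX : IsMoorePenroseInverse A X) {U V : Matrix m n R} :
    A * Uᴴ * A = A * Vᴴ * A ↔ X * U * X = X * V * X := by
  have to_inverse (W : Matrix m n R) : X * W * X = X * Xᴴ * (A * Wᴴ * A)ᴴ * (Xᴴ * X) :=
    calc X * W * X = X * Xᴴ * Aᴴ * W * (Aᴴ * Xᴴ * X) := by
          rw [hX.inverse_mul_conjTranspose_mul_conjTranspose,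
            hX.conjTranspose_mul_conjTranspose_mul_inverse]
      _ = X * Xᴴ * (A * Wᴴ * A)ᴴ * (Xᴴ * X) := by
          simp only [conjTranspose_mul, conjTranspose_conjTranspose, Matrix.mul_assoc]
  have of_inverse (W : Matrix m n R) : (A * Wᴴ * A)ᴴ = Aᴴ * A * (X * W * X) * (A * Aᴴ) :=
    calc (A * Wᴴ * A)ᴴ = Aᴴ * W * Aᴴ := by
          simp only [conjTranspose_mul, conjTranspose_conjTranspose, Matrix.mul_assoc]
      _ = Aᴴ * A * X * W * (X * A * Aᴴ) := by
          rw [hX.conjTranspose_mul_mul_inverse, hX.inverse_mul_mul_conjTranspose]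
      _ = Aᴴ * A * (X * W * X) * (A * Aᴴ) := by simp only [Matrix.mul_assoc]
  constructor
  · intro h
    rw [to_inverse, h, ← to_inverse]
  · intro h
    apply conjTranspose_injective
    rw [of_inverse, h, ← of_inverse]

end NonUnitalSemiring

section CommSemiring

variable [CommSemiring R] [StarRing R]

theorem range_conjTranspose (hX : IsMoorePenroseInverse A X) :
    LinearMap.range Aᴴ.mulVecLin = LinearMap.range X.mulVecLin := by
  apply le_antisymm <;> rw [range_mulVecLin_le_iff_exists_eq_mul]
  · exact ⟨A * Aᴴ, by rw [← Matrix.mul_assoc, hX.inverse_mul_mul_conjTranspose]⟩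
  · exact ⟨Xᴴ * X, by rw [← Matrix.mul_assoc, hX.conjTranspose_mul_conjTranspose_mul_inverse]⟩

theorem range_conjTranspose_le_iff (hX : IsMoorePenroseInverse A X)
    (hY : IsMoorePenroseInverse B Y) :
    LinearMap.range Aᴴ.mulVecLin ≤ LinearMap.range Bᴴ.mulVecLin ↔ Y * B * X = X := by
  rw [hX.range_conjTranspose, hY.range_conjTranspose,
    range_mulVecLin_le_iff_mul_mul_eq hY.inverse_mul_inverse]

theorem range_le_iff (hX : IsMoorePenroseInverse A X) (hY : IsMoorePenroseInverse B Y) :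
    LinearMap.range A.mulVecLin ≤ LinearMap.range B.mulVecLin ↔ X * B * Y = X := by
  have hG : Yᴴ * Bᴴ * Yᴴ = Yᴴ := by
    rw [← conjTranspose_mul, ← conjTranspose_mul, ← Matrix.mul_assoc, hY.inverse_mul_inverse]
  rw [← hX.symm.range_conjTranspose, ← hY.symm.range_conjTranspose,
    range_mulVecLin_le_iff_mul_mul_eq hG, ← conjTranspose_mul, ← conjTranspose_mul,
    conjTranspose_inj, Matrix.mul_assoc]

theorem isDiamondLE_iff (hX : IsMoorePenroseInverse A X) (hY : IsMoorePenroseInverse B Y) :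
    IsDiamondLE_s2 A B ↔ (X * B * Y = X ∧ X * B * X = X) ∧ Y * B * X = X := by
  rw [IsDiamondLE_s2, hX.range_le_iff hY, hX.range_conjTranspose_le_iff hY,
    hX.mul_conjTranspose_mul_eq_iff, hX.inverse_mul_inverse, ← and_assoc, and_right_comm]

end CommSemiring

end IsMoorePenroseInverse

theorem diamond_iff_rank_and_idempotent_general {K m n : Type*} [Field K] [StarRing K]
    [Fintype m] [Fintype n] [DecidableEq n] {A B : Matrix m n K} {X Y : Matrix n m K}
    (hX : IsMoorePenroseInverse A X) (hY : IsMoorePenroseInverse B Y) :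
    (IsDiamondLE_s2 A B ↔ (Y - X).rank = ((1 - X * A) * Y).rank ∧
      LinearMap.range Aᴴ.mulVecLin ≤ LinearMap.range Bᴴ.mulVecLin) ∧
    (IsDiamondLE_s2 A B ↔ (∃ Q : Matrix n n K, IsIdempotentElem Q ∧ X = Q * Y) ∧
      LinearMap.range Aᴴ.mulVecLin ≤ LinearMap.range Bᴴ.mulVecLin) := by
  rw [hX.isDiamondLE_iff hY, hX.range_conjTranspose_le_iff hY]
  constructor <;> refine and_congr_left fun hYX => Iff.symm ?_
  · exact rank_sub_eq_rank_one_sub_mul_iff hX.inverse_mul_inverse hY.inverse_mul_inverse hYX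
  · exact exists_isIdempotentElem_eq_mul_iff hY.inverse_mul_inverse hYX

theorem IsMP.isMoorePenroseInverse {m n : ℕ} {A : Matrix (Fin m) (Fin n) ℂ}
    {X : Matrix (Fin n) (Fin m) ℂ} (hX : IsMP A X) : IsMoorePenroseInverse A X :=
  ⟨hX.1, hX.2.1, hX.2.2.1, hX.2.2.2⟩

theorem diamond_iff_rank_and_idempotent {m n : ℕ} (A B : Matrix (Fin m) (Fin n) ℂ)
    (X Y : Matrix (Fin n) (Fin m) ℂ) (hX : IsMP A X) (hY : IsMP B Y) :
    (diamondLE A B ↔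
      ((Y - X).rank = ((1 - X * A) * Y).rank ∧ colSpace Aᴴ ≤ colSpace Bᴴ)) ∧
    (diamondLE A B ↔
      ((∃ Q : Matrix (Fin n) (Fin n) ℂ, Q * Q = Q ∧ X = Q * Y) ∧
        colSpace Aᴴ ≤ colSpace Bᴴ)) := by
  exact diamond_iff_rank_and_idempotent_general hX.isMoorePenroseInverse hY.isMoorePenroseInverse
end
end

section
/- Let A, B ∈ ℂ^{m×n}, and let X ∈ ℂ^{n×m} be the Moore–Penrose inverse of A and Y ∈ ℂ^{n×m} be the Moore–Penrose inverse of B. If A ≤* B, then AX ≤* BY. -/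
open Matrix

noncomputable section

/- Both `A * X` and `B * Y` are orthogonal projectors, with ranges `R(A)` and `R(B)`, and orthogonal
projectors are star-ordered as soon as their ranges are nested. The nesting comes from one half of
`A ≤* B`: as `X * A` is Hermitian, `A = A * Aᴴ * Xᴴ = B * Aᴴ * Xᴴ`, so `A` factors through `B`. -/

theorem star_mul_self_eq_and_mul_star_self_eq_of_mul_eq {R : Type*} [Mul R] [StarMul R] {p q : R}
    (hp : IsStarProjection p) (hq : IsSelfAdjoint q) (hqp : q * p = p) :
    star p * p = star p * q ∧ p * star p = q * star p := by
  have hpp : p * p = p := hp.isIdempotentElem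
  have hpq : p * q = p := by
    simpa only [star_mul, hp.isSelfAdjoint.star_eq, hq.star_eq] using congrArg star hqp
  simp only [hp.isSelfAdjoint.star_eq, hpp, hpq, hqp, and_self]

section

variable {l m n α : Type*} [Fintype l] [Fintype m] [Fintype n] [NonUnitalSemiring α] [StarRing α]

/-- `X` is a least-squares generalized inverse of `A`, also called a `{1, 3}`-inverse: it satisfies
the first and third Penrose equations, which are what makes `A * X` the orthogonal projector onto
the range of `A`. -/
structure IsLeastSquaresInverse (A : Matrix m n α) (X : Matrix n m α) : Prop where
  mul_mul_self : A * X * A = A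
  isHermitian : (A * X).IsHermitian

theorem IsLeastSquaresInverse.isStarProjection {A : Matrix m n α} {X : Matrix n m α}
    (hX : IsLeastSquaresInverse A X) : IsStarProjection (A * X) where
  isIdempotentElem := by rw [IsIdempotentElem, ← Matrix.mul_assoc, hX.mul_mul_self]
  isSelfAdjoint := hX.isHermitian

theorem eq_mul_of_mul_conjTranspose_eq {A B : Matrix m n α} {X : Matrix n m α}
    (hAXA : A * X * A = A) (hXA : (X * A).IsHermitian) (h : A * Aᴴ = B * Aᴴ) :
    A = B * (X * A) :=
  calc
    A = A * (X * A) := by rw [← Matrix.mul_assoc, hAXA]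
    _ = A * Aᴴ * Xᴴ := by rw [Matrix.mul_assoc, ← conjTranspose_mul, hXA.eq]
    _ = B * Aᴴ * Xᴴ := by rw [h]
    _ = B * (X * A) := by rw [Matrix.mul_assoc, ← conjTranspose_mul, hXA.eq]

theorem star_le_projectors_general {A : Matrix m n α} {B : Matrix m l α} {C : Matrix l n α}
    {X : Matrix n m α} {Y : Matrix l m α} (hX : IsLeastSquaresInverse A X)
    (hY : IsLeastSquaresInverse B Y) (hA : A = B * C) :
    (A * X)ᴴ * (A * X) = (A * X)ᴴ * (B * Y) ∧ (A * X) * (A * X)ᴴ = (B * Y) * (A * X)ᴴ := by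
  have hBYA : B * Y * A = A := by rw [hA, ← Matrix.mul_assoc, hY.mul_mul_self]
  have hBYAX : B * Y * (A * X) = A * X := by rw [← Matrix.mul_assoc, hBYA]
  exact star_mul_self_eq_and_mul_star_self_eq_of_mul_eq
    hX.isStarProjection hY.isHermitian hBYAX

end

theorem IsMP.isLeastSquaresInverse {m n : ℕ} {M : Matrix (Fin m) (Fin n) ℂ}
    {X : Matrix (Fin n) (Fin m) ℂ} (hX : IsMP M X) : IsLeastSquaresInverse M X :=
  ⟨hX.1, hX.2.2.1⟩

theorem star_le_projectors {m n : ℕ} (A B : Matrix (Fin m) (Fin n) ℂ)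
    (X Y : Matrix (Fin n) (Fin m) ℂ) (hX : IsMP A X) (hY : IsMP B Y)
    (h : starLE A B) : starLE (A * X) (B * Y) :=
  star_le_projectors_general hX.isLeastSquaresInverse hY.isLeastSquaresInverse
    (eq_mul_of_mul_conjTranspose_eq hX.1 hX.2.2.2 h.2)
end
end

section
/- Let A, B ∈ ℂ^{m×n}, and let X ∈ ℂ^{n×m} be the Moore–Penrose inverse of A and Y ∈ ℂ^{n×m} be the Moore–Penrose inverse of B. If A ≤⋄ B, then AX ≤⋄ BY. -/
open Matrix

noncomputable section

/-!
`P_A = A * X` and `P_B = B * Y` are the orthogonal projectors onto `R(A)` and `R(B)`. For orthogonal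
projectors the diamond order is inclusion of ranges: if `R(P) ⊆ R(Q)` then `Q * P = P`, so both
`P * Qᴴ * P` and `P * Pᴴ * P` collapse to `P`.
-/

theorem colSpace_mul_le {m n k : ℕ} (M : Matrix (Fin m) (Fin n) ℂ) (N : Matrix (Fin n) (Fin k) ℂ) :
    colSpace (M * N) ≤ colSpace M := by
  rw [colSpace, mulVecLin_mul]
  exact LinearMap.range_comp_le_range _ _

theorem mul_eq_right_of_colSpace_le {m n : ℕ} {E : Matrix (Fin m) (Fin m) ℂ}
    {M : Matrix (Fin m) (Fin n) ℂ} (hE : IsIdempotentElem E) (h : colSpace M ≤ colSpace E) :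
    E * M = M := by
  have hE' : IsIdempotentElem E.mulVecLin := by
    rw [IsIdempotentElem, Module.End.mul_eq_comp, ← mulVecLin_mul, hE.eq]
  apply toLin'.injective
  simpa only [toLin'_apply', mulVecLin_mul] using
    (LinearMap.IsIdempotentElem.comp_eq_right_iff hE' M.mulVecLin).2 h

theorem diamondLE_iff_of_isStarProjection {m : ℕ} {P Q : Matrix (Fin m) (Fin m) ℂ}
    (hP : IsStarProjection P) (hQ : IsStarProjection Q) :
    diamondLE P Q ↔ colSpace P ≤ colSpace Q := by
  have hPH : Pᴴ = P := hP.isSelfAdjoint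
  have hQH : Qᴴ = Q := hQ.isSelfAdjoint
  refine ⟨fun h => h.1, fun h => ⟨h, by rwa [hPH, hQH], ?_⟩⟩
  have hQP : Q * P = P := mul_eq_right_of_colSpace_le hQ.isIdempotentElem h
  rw [hPH, hQH, Matrix.mul_assoc, hQP, hP.isIdempotentElem.eq, hP.isIdempotentElem.eq]

namespace IsMP

variable {m n : ℕ} {M : Matrix (Fin m) (Fin n) ℂ} {X : Matrix (Fin n) (Fin m) ℂ}

theorem isStarProjection_mul (h : IsMP M X) : IsStarProjection (M * X) where
  isIdempotentElem := by rw [IsIdempotentElem, ← Matrix.mul_assoc, h.1]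
  isSelfAdjoint := h.2.2.1

theorem colSpace_mul (h : IsMP M X) : colSpace (M * X) = colSpace M := by
  refine (colSpace_mul_le M X).antisymm ?_
  calc colSpace M = colSpace (M * X * M) := by rw [h.1]
    _ ≤ colSpace (M * X) := colSpace_mul_le (M * X) M

end IsMP

theorem diamond_le_projectors_general {m n k : ℕ} {A : Matrix (Fin m) (Fin n) ℂ}
    {B : Matrix (Fin m) (Fin k) ℂ} {X : Matrix (Fin n) (Fin m) ℂ} {Y : Matrix (Fin k) (Fin m) ℂ}
    (hX : IsMP A X) (hY : IsMP B Y) :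
    diamondLE (A * X) (B * Y) ↔ colSpace A ≤ colSpace B := by
  rw [diamondLE_iff_of_isStarProjection hX.isStarProjection_mul hY.isStarProjection_mul,
    hX.colSpace_mul, hY.colSpace_mul]

theorem diamond_le_projectors {m n : ℕ} (A B : Matrix (Fin m) (Fin n) ℂ)
    (X Y : Matrix (Fin n) (Fin m) ℂ) (hX : IsMP A X) (hY : IsMP B Y)
    (h : diamondLE A B) : diamondLE (A * X) (B * Y) :=
  (diamond_le_projectors_general hX hY).2 h.1
end
end

section
/- Let A, B ∈ ℂ^{m×n}. If A *≤ B (A is below B under the left star partial order), then A ≤⋄ B. -/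
open Matrix

noncomputable section

/-!
Taking conjugate transposes in `Aᴴ * A = Aᴴ * B` gives `Aᴴ * A = Bᴴ * A`, and multiplying by `A` on
the left yields `A * Bᴴ * A = A * Aᴴ * A`. The column space of `Aᴴ * A` lies in that of `Aᴴ` and has
the same dimension, so the two agree; since `Aᴴ * A = Bᴴ * A`, it also lies in that of `Bᴴ`.
-/

theorem conjTranspose_mul_self_eq_conjTranspose_mul {m n R : Type*} [Fintype m]
    [NonUnitalNonAssocSemiring R] [StarRing R] {A B : Matrix m n R} (h : Aᴴ * A = Aᴴ * B) :
    Aᴴ * A = Bᴴ * A := by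
  simpa only [conjTranspose_mul, conjTranspose_conjTranspose] using congrArg conjTranspose h

theorem range_mulVecLin_mul_le_s8 {l m n R : Type*} [Fintype m] [Fintype n] [CommSemiring R]
    (M : Matrix l m R) (N : Matrix m n R) :
    LinearMap.range (M * N).mulVecLin ≤ LinearMap.range M.mulVecLin := by
  rw [mulVecLin_mul]
  exact LinearMap.range_comp_le_range _ _

section StarOrderedField

variable {m n R : Type*} [Fintype m] [Fintype n]
  [Field R] [PartialOrder R] [StarRing R] [StarOrderedRing R]

theorem range_mulVecLin_conjTranspose_mul_self (A : Matrix m n R) :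
    LinearMap.range (Aᴴ * A).mulVecLin = LinearMap.range Aᴴ.mulVecLin := by
  apply Submodule.eq_of_le_of_finrank_eq (range_mulVecLin_mul_le_s8 Aᴴ A)
  calc
    (Aᴴ * A).rank = A.rank := rank_conjTranspose_mul_self A
    _ = Aᴴ.rank := (rank_conjTranspose A).symm

theorem left_star_implies_diamond_general {A B : Matrix m n R} (h : Aᴴ * A = Aᴴ * B) :
    LinearMap.range Aᴴ.mulVecLin ≤ LinearMap.range Bᴴ.mulVecLin ∧
      A * Bᴴ * A = A * Aᴴ * A := by
  have gram_eq : Aᴴ * A = Bᴴ * A := conjTranspose_mul_self_eq_conjTranspose_mul h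
  constructor
  · calc
      LinearMap.range Aᴴ.mulVecLin = LinearMap.range (Bᴴ * A).mulVecLin := by
        rw [← gram_eq, range_mulVecLin_conjTranspose_mul_self]
      _ ≤ LinearMap.range Bᴴ.mulVecLin := range_mulVecLin_mul_le_s8 Bᴴ A
  · rw [Matrix.mul_assoc, ← gram_eq, Matrix.mul_assoc]

end StarOrderedField

theorem left_star_implies_diamond {m n : ℕ} (A B : Matrix (Fin m) (Fin n) ℂ)
    (h : leftStarLE A B) : diamondLE A B := by
  open scoped ComplexOrder in
  exact ⟨h.2, left_star_implies_diamond_general h.1⟩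
end
end

section
/- Let A, B ∈ ℂ^{m×n}, and let X ∈ ℂ^{n×m} be the Moore–Penrose inverse of A. Then the following are equivalent: (a) A is below B under the right star partial order (AA* = BA* and R(A*) ⊆ R(B*)); (b) A ≤⋄ B and AA* = BA*; (c) A ≤⋄ B and AX = BX; (d) A ≤⋄ B and BA* is Hermitian (i.e., (BA*)* = BA*). -/
/-!
For the range inclusion, `A Aᴴ` and `A` have the same column space, so `A Aᴴ = B Aᴴ` already
places the columns of `A` in the column space of `B`. For the Hermitian form, if `B Aᴴ = A Bᴴ`
then the diamond identity `A Bᴴ A = A Aᴴ A` reads `B Aᴴ A = A Aᴴ A`, and the trailing `A` cancels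
because `Aᴴ A` and `A` have the same kernel. For the Moore–Penrose form, `X` and `Aᴴ` are right
multiples of each other, so they are annihilated on the left by the same matrices.
-/

open Matrix

noncomputable section

section

variable {l m n R : Type*} [Fintype n]

lemma range_mulVecLin_self_mul_conjTranspose [Fintype m] [Field R] [PartialOrder R] [StarRing R]
    [StarOrderedRing R] (A : Matrix m n R) :
    LinearMap.range (A * Aᴴ).mulVecLin = LinearMap.range A.mulVecLin := by
  refine Submodule.eq_of_le_of_finrank_eq ?_ A.rank_self_mul_conjTranspose
  rw [mulVecLin_mul]
  exact LinearMap.range_comp_le_range _ _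

lemma range_mulVecLin_le_of_self_mul_conjTranspose_eq_mul [Fintype l] [Finite m] [Field R]
    [PartialOrder R] [StarRing R] [StarOrderedRing R] {A : Matrix m n R} {B : Matrix m l R}
    {C : Matrix l m R} (h : A * Aᴴ = B * C) :
    LinearMap.range A.mulVecLin ≤ LinearMap.range B.mulVecLin := by
  have := Fintype.ofFinite m
  rw [← range_mulVecLin_self_mul_conjTranspose, h, mulVecLin_mul]
  exact LinearMap.range_comp_le_range _ _

lemma mul_conjTranspose_mul_self_inj [Fintype m] [NonUnitalRing R] [PartialOrder R]
    [StarRing R] [StarOrderedRing R] [NoZeroDivisors R] (A : Matrix m n R) (C D : Matrix l n R) :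
    C * Aᴴ * A = D * Aᴴ * A ↔ C * Aᴴ = D * Aᴴ := by
  rw [← sub_eq_zero, ← Matrix.sub_mul, ← Matrix.sub_mul, Matrix.mul_assoc,
    mul_conjTranspose_mul_self_eq_zero, Matrix.sub_mul, sub_eq_zero]

lemma self_mul_conjTranspose_eq_iff_isHermitian [Fintype m] [NonUnitalRing R] [PartialOrder R]
    [StarRing R] [StarOrderedRing R] [NoZeroDivisors R] {A B : Matrix m n R}
    (h : A * Bᴴ * A = A * Aᴴ * A) : A * Aᴴ = B * Aᴴ ↔ (B * Aᴴ).IsHermitian := by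
  refine ⟨fun heq ↦ heq ▸ isHermitian_mul_conjTranspose_self A, fun hBA ↦ ?_⟩
  have hAB : A * Bᴴ = B * Aᴴ := by simpa using hBA.eq
  exact (mul_conjTranspose_mul_self_inj A A B).mp (by rw [← h, hAB])

lemma mul_eq_mul_iff_mul_conjTranspose_eq [Fintype m] [NonUnitalSemiring R] [StarRing R]
    {A : Matrix m n R} {X : Matrix n m R} (hAXA : A * X * A = A) (hXAX : X * A * X = X)
    (hXA : (X * A).IsHermitian) (C D : Matrix l n R) : C * X = D * X ↔ C * Aᴴ = D * Aᴴ := by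
  have conjTranspose_eq : Aᴴ = X * (A * Aᴴ) := by
    rw [← Matrix.mul_assoc, ← hXA.eq, ← conjTranspose_mul, ← Matrix.mul_assoc, hAXA]
  have eq_conjTranspose_mul : X = Aᴴ * (Xᴴ * X) := by
    rw [← Matrix.mul_assoc, ← conjTranspose_mul, hXA.eq, hXAX]
  constructor <;> intro h
  · rw [conjTranspose_eq, ← Matrix.mul_assoc, h, Matrix.mul_assoc]
  · rw [eq_conjTranspose_mul, ← Matrix.mul_assoc, h, Matrix.mul_assoc]

end

lemma rightStarLE_iff_diamondLE_and_eq {m n : ℕ} {A B : Matrix (Fin m) (Fin n) ℂ} :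
    rightStarLE A B ↔ diamondLE A B ∧ A * Aᴴ = B * Aᴴ := by
  refine ⟨fun ⟨heq, hrow⟩ ↦ ⟨⟨?_, hrow, ?_⟩, heq⟩, fun ⟨⟨_, hrow, _⟩, heq⟩ ↦ ⟨heq, hrow⟩⟩
  · open scoped ComplexOrder in
    exact range_mulVecLin_le_of_self_mul_conjTranspose_eq_mul heq
  · have hstar : A * Aᴴ = A * Bᴴ := by simpa using congrArg conjTranspose heq
    rw [hstar]

theorem right_star_iff_diamond {m n : ℕ} (A B : Matrix (Fin m) (Fin n) ℂ)
    (X : Matrix (Fin n) (Fin m) ℂ) (hX : IsMP A X) :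
    (rightStarLE A B ↔ (diamondLE A B ∧ A * Aᴴ = B * Aᴴ)) ∧
    (rightStarLE A B ↔ (diamondLE A B ∧ A * X = B * X)) ∧
    (rightStarLE A B ↔ (diamondLE A B ∧ (B * Aᴴ)ᴴ = B * Aᴴ)) := by
  obtain ⟨hAXA, hXAX, _, hXA⟩ := hX
  refine ⟨rightStarLE_iff_diamondLE_and_eq, ?_, ?_⟩
  · rw [mul_eq_mul_iff_mul_conjTranspose_eq hAXA hXAX hXA]
    exact rightStarLE_iff_diamondLE_and_eq
  · open scoped ComplexOrder in
    exact rightStarLE_iff_diamondLE_and_eq.trans <|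
      and_congr_right fun hAB ↦ self_mul_conjTranspose_eq_iff_isHermitian hAB.2.2
end
end

section
/- Let n, r, t be natural numbers with r ≤ n, let U ∈ ℂ^{n×n} be unitary, let Σ ∈ ℂ^{r×r} be a diagonal matrix with positive real diagonal entries, let K ∈ ℂ^{r×r} and L ∈ ℂ^{r×(n−r)} satisfy KK* + LL* = I_r, let T ∈ ℂ^{r×r} be idempotent (T² = T), and let W ∈ ℂ^{r×r} be the Moore–Penrose inverse of Σ⁻¹T. Define A = U·[[W·K, W·L],[0, 0]]·U* (block rows and columns of sizes r and n−r). Then the Moore–Penrose inverse of A is U·[[K*·Σ⁻¹·T, 0],[L*·Σ⁻¹·T, 0]]·U*. -/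
open Matrix

noncomputable section

/-!
Put `P = U [I; 0]` and `Q = U [K*; L*]`. Both have orthonormal columns, the second because
`KK* + LL* = I`, and `A = P W Q*`. The Penrose equations for `(M, X)` pass to `(P M Q*, Q X P*)`
whenever `P* P = I` and `Q* Q = I`, and they are symmetric in the two matrices, so that
`W` has Moore–Penrose inverse `Σ⁻¹ T` and `A` has Moore–Penrose inverse `Q Σ⁻¹ T P*`.
-/

section Matrix

variable {R k k' l m n o : Type*} [Semiring R] [Star R]

theorem mul_mul_conjTranspose_mul_of_isometry [Fintype k] [Fintype k'] [Fintype l] [Fintype m]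
    [DecidableEq l] {V : Matrix m l R} (hV : Vᴴ * V = 1) (P : Matrix o k R) (M : Matrix k l R)
    (X : Matrix l k' R) (Q : Matrix n k' R) :
    P * M * Vᴴ * (V * X * Qᴴ) = P * (M * X) * Qᴴ := by
  calc P * M * Vᴴ * (V * X * Qᴴ) = P * M * (Vᴴ * V) * X * Qᴴ := by simp only [Matrix.mul_assoc]
    _ = P * (M * X) * Qᴴ := by rw [hV, Matrix.mul_one, Matrix.mul_assoc P]

theorem conjTranspose_mul_self_reindex_fromRows [Fintype l] [Fintype m] [Fintype n]
    (e : m ⊕ n ≃ l) (B : Matrix m k R) (C : Matrix n k R) :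
    (reindex e (.refl k) (fromRows B C))ᴴ * reindex e (.refl k) (fromRows B C) =
      Bᴴ * B + Cᴴ * C := by
  rw [conjTranspose_reindex, reindex_apply, reindex_apply, submatrix_mul_equiv,
    conjTranspose_fromRows_eq_fromCols_conjTranspose, fromCols_mul_fromRows, Equiv.refl_symm,
    Equiv.coe_refl, submatrix_id_id]

theorem reindex_fromRows_mul_mul_conjTranspose {m' n' : Type*} [Fintype k] [Fintype k']
    (e : m ⊕ n ≃ l) (f : m' ⊕ n' ≃ o) (B : Matrix m k R) (C : Matrix n k R) (M : Matrix k k' R)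
    (D : Matrix m' k' R) (E : Matrix n' k' R) :
    reindex e (.refl k) (fromRows B C) * M * (reindex f (.refl k') (fromRows D E))ᴴ =
      reindex e f (fromBlocks (B * M * Dᴴ) (B * M * Eᴴ) (C * M * Dᴴ) (C * M * Eᴴ)) := by
  rw [← fromRows_mul_fromCols, ← fromRows_mul, ← conjTranspose_fromRows_eq_fromCols_conjTranspose]
  rfl

end Matrix

namespace IsMP

variable {m n p q : ℕ} {M : Matrix (Fin p) (Fin q) ℂ} {X : Matrix (Fin q) (Fin p) ℂ}

theorem symm (h : IsMP M X) : IsMP X M :=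
  have ⟨hMXM, hXMX, hMX, hXM⟩ := h
  ⟨hXMX, hMXM, hXM, hMX⟩

theorem mul_mul_conjTranspose (h : IsMP M X) {P : Matrix (Fin m) (Fin p) ℂ}
    {Q : Matrix (Fin n) (Fin q) ℂ} (hP : Pᴴ * P = 1) (hQ : Qᴴ * Q = 1) :
    IsMP (P * M * Qᴴ) (Q * X * Pᴴ) := by
  obtain ⟨hMXM, hXMX, hMX, hXM⟩ := h
  simp only [IsMP, mul_mul_conjTranspose_mul_of_isometry hP,
    mul_mul_conjTranspose_mul_of_isometry hQ, hMXM, hXMX, true_and]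
  exact ⟨isHermitian_mul_mul_conjTranspose P hMX, isHermitian_mul_mul_conjTranspose Q hXM⟩

theorem reindex_fromBlocks {s t u : ℕ} (h : IsMP M X) (e : Fin p ⊕ Fin s ≃ Fin m)
    (f : Fin u ⊕ Fin t ≃ Fin n) {K : Matrix (Fin q) (Fin u) ℂ} {L : Matrix (Fin q) (Fin t) ℂ}
    (hKL : K * Kᴴ + L * Lᴴ = 1) :
    IsMP (reindex e f (fromBlocks (M * K) (M * L) 0 0))
      (reindex f e (fromBlocks (Kᴴ * X) 0 (Lᴴ * X) 0)) := by
  let P := reindex e (.refl (Fin p)) (fromRows (1 : Matrix (Fin p) (Fin p) ℂ) 0)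
  let Q := reindex f (.refl (Fin q)) (fromRows Kᴴ Lᴴ)
  have hP : Pᴴ * P = 1 := by
    rw [conjTranspose_mul_self_reindex_fromRows]
    simp
  have hQ : Qᴴ * Q = 1 := by
    rwa [conjTranspose_mul_self_reindex_fromRows, conjTranspose_conjTranspose,
      conjTranspose_conjTranspose]
  have hPMQ : P * M * Qᴴ = reindex e f (fromBlocks (M * K) (M * L) 0 0) := by
    rw [reindex_fromRows_mul_mul_conjTranspose]
    simp
  have hQXP : Q * X * Pᴴ = reindex f e (fromBlocks (Kᴴ * X) 0 (Lᴴ * X) 0) := by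
    rw [reindex_fromRows_mul_mul_conjTranspose]
    simp
  rw [← hPMQ, ← hQXP]
  exact h.mul_mul_conjTranspose hP hQ

end IsMP

theorem mp_of_diamond_predecessor_general {k l m n p q s t u : ℕ}
    (e : Fin p ⊕ Fin s ≃ Fin m) (f : Fin u ⊕ Fin t ≃ Fin n)
    {U : Matrix (Fin k) (Fin m) ℂ} (hU : Uᴴ * U = 1)
    {V : Matrix (Fin l) (Fin n) ℂ} (hV : Vᴴ * V = 1)
    {K : Matrix (Fin q) (Fin u) ℂ} {L : Matrix (Fin q) (Fin t) ℂ} (hKL : K * Kᴴ + L * Lᴴ = 1)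
    {N : Matrix (Fin q) (Fin p) ℂ} {W : Matrix (Fin p) (Fin q) ℂ} (hW : IsMP N W) :
    IsMP (U * reindex e f (fromBlocks (W * K) (W * L) 0 0) * Vᴴ)
      (V * reindex f e (fromBlocks (Kᴴ * N) 0 (Lᴴ * N) 0) * Uᴴ) :=
  (hW.symm.reindex_fromBlocks e f hKL).mul_mul_conjTranspose hU hV

theorem mp_of_diamond_predecessor {n r t : ℕ} (hrn : r ≤ n)
    (U : Matrix (Fin n) (Fin n) ℂ) (hU : U * Uᴴ = 1)
    (S : Matrix (Fin r) (Fin r) ℂ) (d : Fin r → ℝ) (hd : ∀ i, 0 < d i)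
    (hS : S = Matrix.diagonal fun i => (d i : ℂ))
    (K : Matrix (Fin r) (Fin r) ℂ) (L : Matrix (Fin r) (Fin (n - r)) ℂ)
    (hKL : K * Kᴴ + L * Lᴴ = 1)
    (T : Matrix (Fin r) (Fin r) ℂ) (hT : T * T = T)
    (W : Matrix (Fin r) (Fin r) ℂ) (hW : IsMP (S⁻¹ * T) W)
    (A : Matrix (Fin n) (Fin n) ℂ)
    (hA : A = U * (Matrix.reindex (finPairEquiv hrn) (finPairEquiv hrn)
        (Matrix.fromBlocks (W * K) (W * L) 0 0)) * Uᴴ) :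
    IsMP A (U * (Matrix.reindex (finPairEquiv hrn) (finPairEquiv hrn)
        (Matrix.fromBlocks (Kᴴ * S⁻¹ * T) 0 (Lᴴ * S⁻¹ * T) 0)) * Uᴴ) := by
  rw [mul_eq_one_comm] at hU
  rw [hA, Matrix.mul_assoc Kᴴ, Matrix.mul_assoc Lᴴ]
  exact mp_of_diamond_predecessor_general _ _ hU hU hKL hW
end
end

section
/- Let n, r be natural numbers with r ≤ n, let U ∈ ℂ^{n×n} be unitary, let Σ ∈ ℂ^{r×r} be a diagonal matrix with positive real diagonal entries, let K ∈ ℂ^{r×r} and L ∈ ℂ^{r×(n−r)} satisfy KK* + LL* = I_r, let T ∈ ℂ^{r×r} be idempotent (T² = T), and let W ∈ ℂ^{r×r} be the Moore–Penrose inverse of Σ⁻¹T. Define B = U·[[Σ·K, Σ·L],[0, 0]]·U* and A = U·[[W·K, W·L],[0, 0]]·U* (block rows and columns of sizes r and n−r), so that A ≤⋄ B, the Moore–Penrose inverse of B is B† = U·[[K*·Σ⁻¹, 0],[L*·Σ⁻¹, 0]]·U*, and the Moore–Penrose inverse of A is A† = U·[[K*·Σ⁻¹·T, 0],[L*·Σ⁻¹·T,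 0]]·U*. Then B†·A† is the Moore–Penrose inverse of A·B if and only if Σ⁻¹·K*·Σ⁻¹·T is the Moore–Penrose inverse of W·K·Σ. -/
open Matrix

noncomputable section

/-!
Put `P = U[I; 0]` and `Q = U[Kᴴ; Lᴴ]`. Then `P` is an isometry because `U` is, `Q` is one because
`KKᴴ + LLᴴ = I`, and `QᴴP = K`. A matrix `U[[WK, WL], [0, 0]]Uᴴ` is `PWQᴴ`, so
`AB = P(WKΣ)Qᴴ` and `B†A† = Q(Σ⁻¹KᴴΣ⁻¹T)Pᴴ`. The Penrose equations for this pair are those of the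
inner pair, because `P` and `Q` cancel.
-/

section Sandwich

variable {R : Type*} [Semiring R] {m n k l o p : Type*}

theorem mul_mul_inj_of_mul_eq_one [Fintype m] [Fintype n] [Fintype k] [Fintype l]
    [DecidableEq k] [DecidableEq l] {P : Matrix m k R} {P' : Matrix k m R} (hP : P' * P = 1)
    {Q : Matrix l n R} {Q' : Matrix n l R} (hQ : Q * Q' = 1) {M N : Matrix k l R} :
    P * M * Q = P * N * Q ↔ M = N := by
  have cancel (X : Matrix k l R) : P' * (P * X * Q) * Q' = X :=
    calc P' * (P * X * Q) * Q' = (P' * P) * X * (Q * Q') := by simp only [Matrix.mul_assoc]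
      _ = X := by rw [hP, hQ, Matrix.one_mul, Matrix.mul_one]
  refine ⟨fun h => ?_, fun h => by rw [h]⟩
  rw [← cancel M, h, cancel]

theorem mul_mul_mul_mul_mul_of_mul_eq_one [Fintype n] [Fintype k] [Fintype l] [Fintype o]
    [DecidableEq l] (P : Matrix m k R) (M : Matrix k l R) {Q : Matrix l n R} {Q' : Matrix n l R}
    (hQ : Q * Q' = 1) (N : Matrix l o R) (P' : Matrix o p R) :
    P * M * Q * (Q' * N * P') = P * (M * N) * P' :=
  calc P * M * Q * (Q' * N * P') = P * (M * (Q * Q') * N) * P' := by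
        simp only [Matrix.mul_assoc]
    _ = P * (M * N) * P' := by rw [hQ, Matrix.mul_one]

end Sandwich

theorem conjTranspose_mul_mul_conjTranspose {R : Type*} [NonUnitalSemiring R] [StarRing R]
    {m n k l : Type*} [Fintype k] [Fintype l] (P : Matrix m k R) (M : Matrix k l R)
    (Q : Matrix n l R) : (P * M * Qᴴ)ᴴ = Q * Mᴴ * Pᴴ := by
  simp only [conjTranspose_mul, conjTranspose_conjTranspose, Matrix.mul_assoc]

theorem isMP_mul_mul_conjTranspose_iff {m n k l : ℕ} {P : Matrix (Fin m) (Fin k) ℂ}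
    {Q : Matrix (Fin n) (Fin l) ℂ} (hP : Pᴴ * P = 1) (hQ : Qᴴ * Q = 1)
    (M : Matrix (Fin k) (Fin l) ℂ) (X : Matrix (Fin l) (Fin k) ℂ) :
    IsMP (P * M * Qᴴ) (Q * X * Pᴴ) ↔ IsMP M X := by
  simp only [IsMP, mul_mul_mul_mul_mul_of_mul_eq_one _ _ hP,
    mul_mul_mul_mul_mul_of_mul_eq_one _ _ hQ, conjTranspose_mul_mul_conjTranspose,
    mul_mul_inj_of_mul_eq_one hP hP, mul_mul_inj_of_mul_eq_one hP hQ,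
    mul_mul_inj_of_mul_eq_one hQ hP, mul_mul_inj_of_mul_eq_one hQ hQ]

theorem isMP_mul_mul_iff_of_isometry {m k l : ℕ} {P : Matrix (Fin m) (Fin k) ℂ}
    {Q : Matrix (Fin m) (Fin l) ℂ} (hP : Pᴴ * P = 1) (hQ : Qᴴ * Q = 1)
    (W S : Matrix (Fin k) (Fin l) ℂ) (Y Z : Matrix (Fin l) (Fin k) ℂ) :
    IsMP (P * W * Qᴴ * (P * S * Qᴴ)) (Q * Y * Pᴴ * (Q * Z * Pᴴ)) ↔
      IsMP (W * (Qᴴ * P) * S) (Y * (Pᴴ * Q) * Z) := by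
  rw [← isMP_mul_mul_conjTranspose_iff hP hQ]
  simp only [Matrix.mul_assoc]

section BlockColumn

variable {R : Type*} [Semiring R] {m n k l p q : Type*} [Fintype n]

/-- The block column `[C; D]`, with its rows indexed by `n` through `e`, multiplied by `U` on the
left. With `[C; D]` equal to `[1; 0]` and `[Kᴴ; Lᴴ]` it gives the two isometries between which the
core of each matrix is sandwiched. -/
def blockColumn (U : Matrix m n R) (e : p ⊕ q ≃ n) (C : Matrix p k R) (D : Matrix q k R) :
    Matrix m k R :=
  U * (fromRows C D).submatrix e.symm id

variable [StarRing R]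

theorem conjTranspose_blockColumn_mul_blockColumn [Fintype m] [Fintype p] [Fintype q]
    [DecidableEq n] {U : Matrix m n R} (hU : Uᴴ * U = 1) (e : p ⊕ q ≃ n)
    (C : Matrix p k R) (D : Matrix q k R) (C' : Matrix p l R) (D' : Matrix q l R) :
    (blockColumn U e C D)ᴴ * blockColumn U e C' D' = Cᴴ * C' + Dᴴ * D' := by
  rw [blockColumn, blockColumn, conjTranspose_mul, Matrix.mul_assoc, ← Matrix.mul_assoc Uᴴ, hU,
    Matrix.one_mul, conjTranspose_submatrix, submatrix_mul_equiv,
    conjTranspose_fromRows_eq_fromCols_conjTranspose, fromCols_mul_fromRows, submatrix_id_id]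

theorem blockColumn_mul_mul_conjTranspose_blockColumn [Fintype k] [Fintype l]
    (U : Matrix m n R) (e : p ⊕ q ≃ n) (C : Matrix p k R) (D : Matrix q k R) (M : Matrix k l R)
    (C' : Matrix p l R) (D' : Matrix q l R) :
    blockColumn U e C D * M * (blockColumn U e C' D')ᴴ =
      U * reindex e e
        (fromBlocks (C * M * C'ᴴ) (C * M * D'ᴴ) (D * M * C'ᴴ) (D * M * D'ᴴ)) * Uᴴ := by
  have outer : reindex e e
      (fromBlocks (C * M * C'ᴴ) (C * M * D'ᴴ) (D * M * C'ᴴ) (D * M * D'ᴴ)) =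
        (fromRows C D).submatrix e.symm id * M * ((fromRows C' D').submatrix e.symm id)ᴴ := by
    rw [← fromRows_mul_fromCols, ← fromRows_mul,
      ← conjTranspose_fromRows_eq_fromCols_conjTranspose]
    rfl
  rw [outer, blockColumn, blockColumn, conjTranspose_mul]
  simp only [Matrix.mul_assoc]

end BlockColumn

theorem reverse_order_law_diamond_general {m n r s : ℕ} (e : Fin r ⊕ Fin s ≃ Fin n)
    (U : Matrix (Fin m) (Fin n) ℂ) (hU : Uᴴ * U = 1)
    (K : Matrix (Fin r) (Fin r) ℂ) (L : Matrix (Fin r) (Fin s) ℂ)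
    (hKL : K * Kᴴ + L * Lᴴ = 1) (W S Y Z : Matrix (Fin r) (Fin r) ℂ)
    (A B Ad Bd : Matrix (Fin m) (Fin m) ℂ)
    (hB : B = U * reindex e e (fromBlocks (S * K) (S * L) 0 0) * Uᴴ)
    (hA : A = U * reindex e e (fromBlocks (W * K) (W * L) 0 0) * Uᴴ)
    (hBd : Bd = U * reindex e e (fromBlocks (Kᴴ * Y) 0 (Lᴴ * Y) 0) * Uᴴ)
    (hAd : Ad = U * reindex e e (fromBlocks (Kᴴ * Z) 0 (Lᴴ * Z) 0) * Uᴴ) :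
    IsMP (A * B) (Bd * Ad) ↔ IsMP (W * K * S) (Y * Kᴴ * Z) := by
  let P := blockColumn U e (1 : Matrix (Fin r) (Fin r) ℂ) 0
  let Q := blockColumn U e Kᴴ Lᴴ
  have hP : Pᴴ * P = 1 := by simp [P, conjTranspose_blockColumn_mul_blockColumn hU]
  have hQ : Qᴴ * Q = 1 := by simp [Q, conjTranspose_blockColumn_mul_blockColumn hU, hKL]
  have hQP : Qᴴ * P = K := by simp [P, Q, conjTranspose_blockColumn_mul_blockColumn hU]
  have hPQ : Pᴴ * Q = Kᴴ := by simp [P, Q, conjTranspose_blockColumn_mul_blockColumn hU]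
  have fromBlocks_upper (M : Matrix (Fin r) (Fin r) ℂ) :
      U * reindex e e (fromBlocks (M * K) (M * L) 0 0) * Uᴴ = P * M * Qᴴ := by
    simp [P, Q, blockColumn_mul_mul_conjTranspose_blockColumn]
  have fromBlocks_left (M : Matrix (Fin r) (Fin r) ℂ) :
      U * reindex e e (fromBlocks (Kᴴ * M) 0 (Lᴴ * M) 0) * Uᴴ = Q * M * Pᴴ := by
    simp [P, Q, blockColumn_mul_mul_conjTranspose_blockColumn]
  rw [hA, hB, hAd, hBd, fromBlocks_upper, fromBlocks_upper, fromBlocks_left, fromBlocks_left,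
    isMP_mul_mul_iff_of_isometry hP hQ, hQP, hPQ]

theorem reverse_order_law_diamond {n r : ℕ} (hrn : r ≤ n)
    (U : Matrix (Fin n) (Fin n) ℂ) (hU : U * Uᴴ = 1)
    (S : Matrix (Fin r) (Fin r) ℂ) (d : Fin r → ℝ) (hd : ∀ i, 0 < d i)
    (hS : S = Matrix.diagonal fun i => (d i : ℂ))
    (K : Matrix (Fin r) (Fin r) ℂ) (L : Matrix (Fin r) (Fin (n - r)) ℂ)
    (hKL : K * Kᴴ + L * Lᴴ = 1)
    (T : Matrix (Fin r) (Fin r) ℂ) (hT : T * T = T)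
    (W : Matrix (Fin r) (Fin r) ℂ) (hW : IsMP (S⁻¹ * T) W)
    (A B Ad Bd : Matrix (Fin n) (Fin n) ℂ)
    (hB : B = U * (Matrix.reindex (finPairEquiv hrn) (finPairEquiv hrn)
        (Matrix.fromBlocks (S * K) (S * L) 0 0)) * Uᴴ)
    (hA : A = U * (Matrix.reindex (finPairEquiv hrn) (finPairEquiv hrn)
        (Matrix.fromBlocks (W * K) (W * L) 0 0)) * Uᴴ)
    (hdiam : diamondLE A B)
    (hBd : Bd = U * (Matrix.reindex (finPairEquiv hrn) (finPairEquiv hrn)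
        (Matrix.fromBlocks (Kᴴ * S⁻¹) 0 (Lᴴ * S⁻¹) 0)) * Uᴴ)
    (hBdMP : IsMP B Bd)
    (hAd : Ad = U * (Matrix.reindex (finPairEquiv hrn) (finPairEquiv hrn)
        (Matrix.fromBlocks (Kᴴ * S⁻¹ * T) 0 (Lᴴ * S⁻¹ * T) 0)) * Uᴴ)
    (hAdMP : IsMP A Ad) :
    IsMP (A * B) (Bd * Ad) ↔ IsMP (W * K * S) (S⁻¹ * Kᴴ * S⁻¹ * T) := by
  rw [Matrix.mul_assoc Kᴴ, Matrix.mul_assoc Lᴴ] at hAd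
  simpa only [Matrix.mul_assoc] using reverse_order_law_diamond_general (finPairEquiv hrn) U
    (mul_eq_one_comm.mp hU) K L hKL W S S⁻¹ (S⁻¹ * T) A B Ad Bd hB hA hBd hAd
end
end

section
/- Let n, r be natural numbers with r ≤ n, let U ∈ ℂ^{n×n} be unitary, let Σ ∈ ℂ^{r×r} be a diagonal matrix with positive real diagonal entries, and let K ∈ ℂ^{r×r} and L ∈ ℂ^{r×(n−r)} satisfy KK* + LL* = I_r. Define B = U·[[Σ·K, Σ·L],[0, 0]]·U* (block rows and columns of sizes r and n−r), whose Moore–Penrose inverse is B† = U·[[K*·Σ⁻¹, 0],[L*·Σ⁻¹, 0]]·U*. Then (B†)² is the Moore–Penrose inverse of B² if and only if Σ⁻¹·K*·Σ⁻¹ is the Moore–Penrose inverse of Σ·K·Σ. -/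
open Matrix

noncomputable section

/-!
Write `B = V S W*`, where `V = U [I; 0]` and `W = U [K*; L*]` are isometries, the latter because
`K K* + L L* = I`. Then `B† = W S⁻¹ V*` and `W* V = K`, so that `B² = V (S K S) W*` and
`(B†)² = W (S⁻¹ K* S⁻¹) V*`. Each Penrose equation for this pair is the corresponding equation for
`S K S` and `S⁻¹ K* S⁻¹`, conjugated by `V` and `W`, and can be compressed back because
`V* V = I` and `W* W = I`.
-/

/-- `X` is the Moore–Penrose inverse of `M`, for matrices over an arbitrary star semiring and with
arbitrary finite index types. Over `ℂ` with `Fin` indices this is `IsMP` by definition. -/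
def IsMoorePenrose_s14 {m n R : Type*} [Fintype m] [Fintype n] [Semiring R] [StarRing R]
    (M : Matrix m n R) (X : Matrix n m R) : Prop :=
  M * X * M = M ∧ X * M * X = X ∧ (M * X)ᴴ = M * X ∧ (X * M)ᴴ = X * M

section

variable {k l m n p q R : Type*} [Fintype k] [Fintype l] [Semiring R] [StarRing R]

theorem conjTranspose_mul_mul_conjTranspose_s14 (V : Matrix m k R) (A : Matrix k l R)
    (W : Matrix n l R) : (V * A * Wᴴ)ᴴ = W * Aᴴ * Vᴴ := by
  simp only [conjTranspose_mul, conjTranspose_conjTranspose, Matrix.mul_assoc]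

variable [Fintype n]

theorem mul_conjTranspose_mul_of_isometry [Fintype q] [DecidableEq l] {W : Matrix n l R}
    (hW : Wᴴ * W = 1) (V : Matrix m k R) (A : Matrix k l R) (C : Matrix l q R)
    (Y : Matrix p q R) : V * A * Wᴴ * (W * C * Yᴴ) = V * (A * C) * Yᴴ :=
  calc V * A * Wᴴ * (W * C * Yᴴ) = V * A * (Wᴴ * W) * C * Yᴴ := by simp only [Matrix.mul_assoc]
    _ = V * (A * C) * Yᴴ := by rw [hW, Matrix.mul_one, Matrix.mul_assoc V]

variable [Fintype m] [DecidableEq k] [DecidableEq l]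

theorem mul_mul_conjTranspose_inj_of_isometry {V : Matrix m k R} {W : Matrix n l R}
    (hV : Vᴴ * V = 1) (hW : Wᴴ * W = 1) {A C : Matrix k l R} :
    V * A * Wᴴ = V * C * Wᴴ ↔ A = C := by
  have compress (D : Matrix k l R) : Vᴴ * (V * D * Wᴴ) * W = D :=
    calc Vᴴ * (V * D * Wᴴ) * W = Vᴴ * V * D * (Wᴴ * W) := by simp only [Matrix.mul_assoc]
      _ = D := by rw [hV, hW, Matrix.one_mul, Matrix.mul_one]
  refine ⟨fun h => ?_, fun h => by rw [h]⟩
  rw [← compress A, h, compress]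

theorem isMoorePenrose_isometry_iff {V : Matrix m k R} {W : Matrix n l R}
    (hV : Vᴴ * V = 1) (hW : Wᴴ * W = 1) {M : Matrix k l R} {X : Matrix l k R} :
    IsMoorePenrose_s14 (V * M * Wᴴ) (W * X * Vᴴ) ↔ IsMoorePenrose_s14 M X := by
  simp only [IsMoorePenrose_s14, mul_conjTranspose_mul_of_isometry hV,
    mul_conjTranspose_mul_of_isometry hW, conjTranspose_mul_mul_conjTranspose_s14,
    mul_mul_conjTranspose_inj_of_isometry hV hW, mul_mul_conjTranspose_inj_of_isometry hW hV,
    mul_mul_conjTranspose_inj_of_isometry hV hV, mul_mul_conjTranspose_inj_of_isometry hW hW]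

theorem isMoorePenrose_mul_self_iff {V : Matrix m k R} {W : Matrix m l R}
    (hV : Vᴴ * V = 1) (hW : Wᴴ * W = 1) (S : Matrix k l R) (T : Matrix l k R) :
    IsMoorePenrose_s14 (V * S * Wᴴ * (V * S * Wᴴ)) (W * T * Vᴴ * (W * T * Vᴴ)) ↔
      IsMoorePenrose_s14 (S * (Wᴴ * V) * S) (T * (Vᴴ * W) * T) := by
  rw [← isMoorePenrose_isometry_iff hV hW]
  simp only [Matrix.mul_assoc]

end

theorem mul_reindex_mul_conjTranspose {l m n R : Type*} [Fintype l] [Fintype m] [Semiring R]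
    [StarRing R] (e : l ≃ m) (U : Matrix n m R) (M : Matrix l l R) :
    U * reindex e e M * Uᴴ = U.submatrix id e * M * (U.submatrix id e)ᴴ := by
  obtain ⟨N, rfl⟩ := (reindex e e).symm.surjective M
  simp only [reindex_symm, reindex_apply, Equiv.symm_symm, submatrix_submatrix,
    Equiv.self_comp_symm, conjTranspose_submatrix, submatrix_mul_equiv, submatrix_id_id]

theorem isometry_submatrix {l m n R : Type*} [Fintype n] [DecidableEq l] [DecidableEq m]
    [Semiring R] [StarRing R] {e : l → m} (he : Function.Injective e) {U : Matrix n m R}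
    (hU : Uᴴ * U = 1) : (U.submatrix id e)ᴴ * U.submatrix id e = 1 := by
  rw [conjTranspose_submatrix, ← submatrix_mul _ _ _ _ _ Function.bijective_id, hU,
    submatrix_one e he]

section

variable {k l m n R : Type*} [Fintype k] [Fintype l] [Fintype m] [Fintype n]
  [DecidableEq k] [Semiring R] [StarRing R]

theorem isMoorePenrose_fromBlocks_mul_self_iff (S : Matrix l k R) (T : Matrix k l R)
    {K : Matrix k l R} {L : Matrix k m R} (hKL : K * Kᴴ + L * Lᴴ = 1)
    {B C : Matrix (l ⊕ m) (l ⊕ m) R} (hB : B = fromBlocks (S * K) (S * L) 0 0)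
    (hC : C = fromBlocks (Kᴴ * T) 0 (Lᴴ * T) 0) :
    IsMoorePenrose_s14 (B * B) (C * C) ↔ IsMoorePenrose_s14 (S * K * S) (T * Kᴴ * T) := by
  classical
  let V : Matrix (l ⊕ m) l R := fromRows 1 0
  let W : Matrix (l ⊕ m) k R := fromRows Kᴴ Lᴴ
  have hVH : Vᴴ = fromCols 1 0 := by
    simp only [V, conjTranspose_fromRows_eq_fromCols_conjTranspose, conjTranspose_one,
      conjTranspose_zero]
  have hWH : Wᴴ = fromCols K L := by
    simp only [W, conjTranspose_fromRows_eq_fromCols_conjTranspose, conjTranspose_conjTranspose]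
  have hV : Vᴴ * V = 1 := by simp [hVH, V, fromCols_mul_fromRows]
  have hW : Wᴴ * W = 1 := by rw [hWH, fromCols_mul_fromRows, hKL]
  have hWV : Wᴴ * V = K := by simp [hWH, V, fromCols_mul_fromRows]
  have hVW : Vᴴ * W = Kᴴ := by simp [hVH, W, fromCols_mul_fromRows]
  have hBVW : B = V * S * Wᴴ := by simp [hB, hWH, V, ← fromRows_fromCols_eq_fromBlocks]
  have hCWV : C = W * T * Vᴴ := by simp [hC, hVH, W, ← fromCols_fromRows_eq_fromBlocks]
  rw [hBVW, hCWV, isMoorePenrose_mul_self_iff hV hW, hWV, hVW]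

theorem bi_dagger_characterization_general [DecidableEq l] [DecidableEq m]
    {U : Matrix n (l ⊕ m) R} (hU : Uᴴ * U = 1)
    (S : Matrix l k R) (T : Matrix k l R) {K : Matrix k l R} {L : Matrix k m R}
    (hKL : K * Kᴴ + L * Lᴴ = 1) {B C : Matrix n n R}
    (hB : B = U * fromBlocks (S * K) (S * L) (0 : Matrix m l R) (0 : Matrix m m R) * Uᴴ)
    (hC : C = U * fromBlocks (Kᴴ * T) (0 : Matrix l m R) (Lᴴ * T) (0 : Matrix m m R) * Uᴴ) :
    IsMoorePenrose_s14 (B * B) (C * C) ↔ IsMoorePenrose_s14 (S * K * S) (T * Kᴴ * T) := by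
  rw [hB, hC, mul_conjTranspose_mul_of_isometry hU, mul_conjTranspose_mul_of_isometry hU,
    isMoorePenrose_isometry_iff hU hU, isMoorePenrose_fromBlocks_mul_self_iff S T hKL rfl rfl]

end

theorem bi_dagger_characterization {n r : ℕ} (hrn : r ≤ n)
    (U : Matrix (Fin n) (Fin n) ℂ) (hU : U * Uᴴ = 1)
    (S : Matrix (Fin r) (Fin r) ℂ) (d : Fin r → ℝ) (hd : ∀ i, 0 < d i)
    (hS : S = Matrix.diagonal fun i => (d i : ℂ))
    (K : Matrix (Fin r) (Fin r) ℂ) (L : Matrix (Fin r) (Fin (n - r)) ℂ)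
    (hKL : K * Kᴴ + L * Lᴴ = 1)
    (B Bd : Matrix (Fin n) (Fin n) ℂ)
    (hB : B = U * (Matrix.reindex (finPairEquiv hrn) (finPairEquiv hrn)
        (Matrix.fromBlocks (S * K) (S * L) 0 0)) * Uᴴ)
    (hBd : Bd = U * (Matrix.reindex (finPairEquiv hrn) (finPairEquiv hrn)
        (Matrix.fromBlocks (Kᴴ * S⁻¹) 0 (Lᴴ * S⁻¹) 0)) * Uᴴ)
    (hBdMP : IsMP B Bd) :
    IsMP (B * B) (Bd * Bd) ↔ IsMP (S * K * S) (S⁻¹ * Kᴴ * S⁻¹) := by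
  rw [mul_reindex_mul_conjTranspose] at hB hBd
  exact bi_dagger_characterization_general
    (isometry_submatrix (Equiv.injective _) (mul_eq_one_comm.mp hU)) S S⁻¹ hKL hB hBd
end
end

section
/- Let n, r be natural numbers with r ≤ n, let U ∈ ℂ^{n×n} be unitary, let Σ ∈ ℂ^{r×r} be a diagonal matrix with positive real diagonal entries, let K ∈ ℂ^{r×r} and L ∈ ℂ^{r×(n−r)} satisfy KK* + LL* = I_r, let T ∈ ℂ^{r×r} be idempotent (T² = T), and let W ∈ ℂ^{r×r} be the Moore–Penrose inverse of Σ⁻¹T. Define B = U·[[Σ·K, Σ·L],[0, 0]]·U* and A = U·[[W·K, W·L],[0, 0]]·U* (block rows and columns of sizes r and n−r), so that A ≤⋄ B, the Moore–Penrose inverse of B is B† = U·[[K*·Σ⁻¹, 0],[L*·Σ⁻¹, 0]]·U*, and the Moore–Penrose inverse of A is A† = U·[[K*·Σ⁻¹·T, 0],[L*·Σ⁻¹·T, 0]]·U*. Then A† ≤⋄ B† if and only if T·(T* − I_r)·Σ⁻²·T = 0. -/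
open Matrix

noncomputable section

/-!
The matrix `U [[K* X, 0], [L* X, 0]] U*` factors as `V X E*`, where `V = U [K*; L*]` and
`E = U [I; 0]` are isometries. So `A†` and `B†` are `S⁻¹ T` and `S⁻¹` moved by the same pair of
isometries, which neither creates nor destroys a diamond relation. In the comparison of `S⁻¹ T`
with `S⁻¹` the range conditions hold because `S⁻¹` is invertible, and cancelling `S⁻¹` on the left
of the remaining equation leaves the stated one.
-/

section StackedColumn

variable {R m n p q r m' n' p' q' r' : Type*} [Fintype n] [Fintype n'] [Semiring R]

/-- The two-block column `U * [F; G]`, where the equivalence `e` numbers the rows of the stack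
`[F; G]` by the columns of `U`. For unitary `U` it is an isometry as soon as `F* F + G* G = 1`. -/
def stackedColumn (U : Matrix m n R) (e : p ⊕ q ≃ n) (F : Matrix p r R) (G : Matrix q r R) :
    Matrix m r R :=
  U * (fromRows F G).submatrix e.symm id

theorem stackedColumn_mul_mul_conjTranspose [StarRing R] [Fintype r] [Fintype r']
    (U : Matrix m n R) (e : p ⊕ q ≃ n) (F : Matrix p r R) (G : Matrix q r R) (X : Matrix r r' R)
    (U' : Matrix m' n' R) (e' : p' ⊕ q' ≃ n') (F' : Matrix p' r' R) (G' : Matrix q' r' R) :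
    stackedColumn U e F G * X * (stackedColumn U' e' F' G')ᴴ =
      U * reindex e e' (fromBlocks (F * X * F'ᴴ) (F * X * G'ᴴ) (G * X * F'ᴴ) (G * X * G'ᴴ)) *
        U'ᴴ := by
  have stack_mul : (fromRows F G).submatrix e.symm id * X =
      (fromRows F G * X).submatrix e.symm id := rfl
  have stack_mul_stack : (fromRows F G * X).submatrix e.symm id *
      (fromCols F'ᴴ G'ᴴ).submatrix id e'.symm =
        reindex e e' (fromRows F G * X * fromCols F'ᴴ G'ᴴ) := rfl
  rw [← fromRows_mul_fromCols, ← fromRows_mul, ← stack_mul_stack, ← stack_mul]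
  simp only [stackedColumn, conjTranspose_mul, conjTranspose_submatrix,
    conjTranspose_fromRows_eq_fromCols_conjTranspose, Matrix.mul_assoc]

theorem stackedColumn_conjTranspose_mul_self [StarRing R] [Fintype m] [Fintype p] [Fintype q]
    [DecidableEq n] [DecidableEq r] {U : Matrix m n R} (hU : Uᴴ * U = 1) (e : p ⊕ q ≃ n)
    {F : Matrix p r R} {G : Matrix q r R} (hFG : Fᴴ * F + Gᴴ * G = 1) :
    (stackedColumn U e F G)ᴴ * stackedColumn U e F G = 1 := by
  rw [stackedColumn, conjTranspose_mul, Matrix.mul_assoc, ← Matrix.mul_assoc Uᴴ, hU,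
    Matrix.one_mul, conjTranspose_submatrix, submatrix_mul_equiv,
    conjTranspose_fromRows_eq_fromCols_conjTranspose, fromCols_mul_fromRows, hFG, submatrix_id_id]

end StackedColumn

section ColSpace

variable {l m n k : ℕ}

theorem colSpace_mul (M : Matrix (Fin l) (Fin m) ℂ) (N : Matrix (Fin m) (Fin n) ℂ) :
    colSpace (M * N) = (colSpace N).map M.mulVecLin := by
  rw [colSpace, mulVecLin_mul, LinearMap.range_comp, colSpace]

theorem colSpace_eq_top_of_mul_eq_one {M : Matrix (Fin m) (Fin n) ℂ}
    {N : Matrix (Fin n) (Fin m) ℂ} (h : M * N = 1) : colSpace M = ⊤ :=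
  LinearMap.range_eq_top.2 (mulVec_surjective_iff_exists_right_inverse.2 ⟨N, h⟩)

theorem colSpace_mul_of_mul_eq_one (M : Matrix (Fin l) (Fin m) ℂ) {N : Matrix (Fin m) (Fin n) ℂ}
    {N' : Matrix (Fin n) (Fin m) ℂ} (h : N * N' = 1) : colSpace (M * N) = colSpace M := by
  rw [colSpace_mul, colSpace_eq_top_of_mul_eq_one h, Submodule.map_top, colSpace]

theorem colSpace_mul_le_colSpace_mul_iff {V : Matrix (Fin l) (Fin m) ℂ}
    {V' : Matrix (Fin m) (Fin l) ℂ} (h : V' * V = 1) (M : Matrix (Fin m) (Fin n) ℂ)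
    (N : Matrix (Fin m) (Fin k) ℂ) : colSpace (V * M) ≤ colSpace (V * N) ↔
      colSpace M ≤ colSpace N := by
  have hV : Function.Injective V.mulVecLin :=
    Function.LeftInverse.injective (g := V'.mulVec) fun x => by simp [h]
  rw [colSpace_mul, colSpace_mul, Submodule.map_le_map_iff_of_injective hV]

theorem colSpace_eq_top_of_isUnit {P : Matrix (Fin n) (Fin n) ℂ} (hP : IsUnit P) :
    colSpace P = ⊤ :=
  LinearMap.range_eq_top.2 (mulVec_surjective_iff_isUnit.2 hP)

end ColSpace

section DiamondLE

variable {l m n k : ℕ}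

theorem diamondLE_isometry_mul_mul_iff {V : Matrix (Fin l) (Fin m) ℂ}
    {E : Matrix (Fin k) (Fin n) ℂ} (hV : Vᴴ * V = 1) (hE : Eᴴ * E = 1)
    (M N : Matrix (Fin m) (Fin n) ℂ) :
    diamondLE (V * M * Eᴴ) (V * N * Eᴴ) ↔ diamondLE M N := by
  have conjTranspose_sandwich (X : Matrix (Fin m) (Fin n) ℂ) :
      (V * X * Eᴴ)ᴴ = E * Xᴴ * Vᴴ := by
    simp only [conjTranspose_mul, conjTranspose_conjTranspose, Matrix.mul_assoc]
  have triple_product (X : Matrix (Fin m) (Fin n) ℂ) :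
      V * M * Eᴴ * (V * X * Eᴴ)ᴴ * (V * M * Eᴴ) = V * (M * Xᴴ * M) * Eᴴ := calc
    _ = V * M * (Eᴴ * E) * Xᴴ * (Vᴴ * V) * M * Eᴴ := by
      rw [conjTranspose_sandwich]
      simp only [Matrix.mul_assoc]
    _ = V * (M * Xᴴ * M) * Eᴴ := by
      simp only [hV, hE, Matrix.mul_one, Matrix.mul_assoc]
  have cancel {X Y : Matrix (Fin m) (Fin n) ℂ} : V * X * Eᴴ = V * Y * Eᴴ ↔ X = Y :=
    (mul_left_injective_of_inv Eᴴ E hE).eq_iff.trans (mul_right_injective_of_inv Vᴴ V hV).eq_iff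
  rw [diamondLE, diamondLE, triple_product, triple_product, cancel, conjTranspose_sandwich,
    conjTranspose_sandwich, colSpace_mul_of_mul_eq_one _ hE, colSpace_mul_of_mul_eq_one _ hE,
    colSpace_mul_of_mul_eq_one _ hV, colSpace_mul_of_mul_eq_one _ hV,
    colSpace_mul_le_colSpace_mul_iff hV, colSpace_mul_le_colSpace_mul_iff hE]

theorem diamondLE_iff_of_isUnit {P : Matrix (Fin n) (Fin n) ℂ} (hP : IsUnit P)
    (M : Matrix (Fin n) (Fin n) ℂ) : diamondLE M P ↔ M * Pᴴ * M = M * Mᴴ * M := by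
  simp only [diamondLE, colSpace_eq_top_of_isUnit hP,
    colSpace_eq_top_of_isUnit ((isUnit_conjTranspose P).2 hP), le_top, true_and]

theorem diamondLE_mul_left_iff_of_isUnit {P : Matrix (Fin n) (Fin n) ℂ} (hP : IsUnit P)
    (T : Matrix (Fin n) (Fin n) ℂ) :
    diamondLE (P * T) P ↔ T * (Tᴴ - 1) * (Pᴴ * P) * T = 0 := by
  have triple_product_sub :
      P * T * (P * T)ᴴ * (P * T) - P * T * Pᴴ * (P * T) =
        P * (T * (Tᴴ - 1) * (Pᴴ * P) * T) := by
    rw [conjTranspose_mul]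
    noncomm_ring
  rw [diamondLE_iff_of_isUnit hP, eq_comm, ← sub_eq_zero, triple_product_sub,
    hP.mul_right_eq_zero]

end DiamondLE

theorem diamond_of_mp_iff_general {n r : ℕ} (hrn : r ≤ n)
    (U : Matrix (Fin n) (Fin n) ℂ) (hU : U * Uᴴ = 1)
    (S : Matrix (Fin r) (Fin r) ℂ) (hS : IsUnit S)
    (K : Matrix (Fin r) (Fin r) ℂ) (L : Matrix (Fin r) (Fin (n - r)) ℂ)
    (hKL : K * Kᴴ + L * Lᴴ = 1) (T : Matrix (Fin r) (Fin r) ℂ)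
    (Ad Bd : Matrix (Fin n) (Fin n) ℂ)
    (hBd : Bd = U * (Matrix.reindex (finPairEquiv hrn) (finPairEquiv hrn)
        (Matrix.fromBlocks (Kᴴ * S⁻¹) 0 (Lᴴ * S⁻¹) 0)) * Uᴴ)
    (hAd : Ad = U * (Matrix.reindex (finPairEquiv hrn) (finPairEquiv hrn)
        (Matrix.fromBlocks (Kᴴ * S⁻¹ * T) 0 (Lᴴ * S⁻¹ * T) 0)) * Uᴴ) :
    diamondLE Ad Bd ↔ T * (Tᴴ - 1) * (S⁻¹ᴴ * S⁻¹) * T = 0 := by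
  have hU' : Uᴴ * U = 1 := mul_eq_one_comm.1 hU
  set e := finPairEquiv hrn
  set V := stackedColumn U e Kᴴ Lᴴ
  set E := stackedColumn U e (1 : Matrix (Fin r) (Fin r) ℂ) 0
  have hV : Vᴴ * V = 1 := stackedColumn_conjTranspose_mul_self hU' e (by simpa using hKL)
  have hE : Eᴴ * E = 1 := stackedColumn_conjTranspose_mul_self hU' e (by simp)
  have factor (X : Matrix (Fin r) (Fin r) ℂ) :
      U * reindex e e (fromBlocks (Kᴴ * X) 0 (Lᴴ * X) 0) * Uᴴ = V * X * Eᴴ := by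
    simp [V, E, stackedColumn_mul_mul_conjTranspose]
  rw [hAd, hBd, Matrix.mul_assoc Kᴴ, Matrix.mul_assoc Lᴴ, factor, factor,
    diamondLE_isometry_mul_mul_iff hV hE,
    diamondLE_mul_left_iff_of_isUnit (isUnit_nonsing_inv_iff.2 hS)]

theorem diamond_of_mp_iff {n r : ℕ} (hrn : r ≤ n)
    (U : Matrix (Fin n) (Fin n) ℂ) (hU : U * Uᴴ = 1)
    (S : Matrix (Fin r) (Fin r) ℂ) (d : Fin r → ℝ) (hd : ∀ i, 0 < d i)
    (hS : S = Matrix.diagonal fun i => (d i : ℂ))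
    (K : Matrix (Fin r) (Fin r) ℂ) (L : Matrix (Fin r) (Fin (n - r)) ℂ)
    (hKL : K * Kᴴ + L * Lᴴ = 1)
    (T : Matrix (Fin r) (Fin r) ℂ) (hT : T * T = T)
    (W : Matrix (Fin r) (Fin r) ℂ) (hW : IsMP (S⁻¹ * T) W)
    (A B Ad Bd : Matrix (Fin n) (Fin n) ℂ)
    (hB : B = U * (Matrix.reindex (finPairEquiv hrn) (finPairEquiv hrn)
        (Matrix.fromBlocks (S * K) (S * L) 0 0)) * Uᴴ)
    (hA : A = U * (Matrix.reindex (finPairEquiv hrn) (finPairEquiv hrn)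
        (Matrix.fromBlocks (W * K) (W * L) 0 0)) * Uᴴ)
    (hdiam : diamondLE A B)
    (hBd : Bd = U * (Matrix.reindex (finPairEquiv hrn) (finPairEquiv hrn)
        (Matrix.fromBlocks (Kᴴ * S⁻¹) 0 (Lᴴ * S⁻¹) 0)) * Uᴴ)
    (hBdMP : IsMP B Bd)
    (hAd : Ad = U * (Matrix.reindex (finPairEquiv hrn) (finPairEquiv hrn)
        (Matrix.fromBlocks (Kᴴ * S⁻¹ * T) 0 (Lᴴ * S⁻¹ * T) 0)) * Uᴴ)
    (hAdMP : IsMP A Ad) :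
    diamondLE Ad Bd ↔ T * (Tᴴ - 1) * (S⁻¹ * S⁻¹) * T = 0 := by
  have hS_unit : IsUnit S := by
    simpa [hS, isUnit_diagonal, Pi.isUnit_iff] using fun i => (hd i).ne'
  have hS_herm : S.IsHermitian := hS ▸
    isHermitian_diagonal_of_self_adjoint _ (funext fun i => Complex.conj_ofReal (d i))
  simpa only [hS_herm.inv.eq] using
    diamond_of_mp_iff_general hrn U hU S hS_unit K L hKL T Ad Bd hBd hAd
end
end
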